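/- arXiv:1308.5276 — 2 statements merged into one kernel-verified Lean document; each statement's English description precedes it below -/
import Mathlib

section
/- Let (u_i)_{i ∈ ℕ} be a sequence of vectors in a complex Hilbert space H such that Σ_i u_i ⊗ u_i = I (the partial sums converge to the identity operator in the strong operator topology) and ‖u_i‖² ≤ ε for all i. Then there is a partition of ℕ into sets S_1 and S_2 such that for each j ∈ {1,2}, ‖Σ_{i ∈ S_j} u_i ⊗ u_i‖ ≤ 1/2 + √(2ε) + ε. -/
open Filter

/-- The rank-one operator `u ⊗ u : v ↦ ⟨v, u⟩ u` on a complex Hilbert space. -/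
noncomputable def rankOne {H : Type*} [NormedAddCommGroup H] [InnerProductSpace ℂ H]
    (u : H) : H →L[ℂ] H :=
  (innerSL ℂ u).smulRight u

/-- Real-rooted monic polynomial, positive on a ray, has positive Taylor coefficients. -/
lemma ks_taylor_pos (x0 : ℝ) : ∀ (n : ℕ) (h : Polynomial ℝ), h.Monic → h.natDegree = n →
    (∀ x : ℂ, 0 < x.im → Polynomial.aeval x h ≠ 0) →
    (∀ x : ℝ, x0 ≤ x → h.eval x ≠ 0) →
    ∀ k ≤ n, 0 < (h.comp (Polynomial.X + Polynomial.C x0)).coeff k := by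
  intro n
  induction n with
  | zero =>
    intro h hm hd _ _ k hk
    have : h = 1 := hm.natDegree_eq_zero.mp hd
    subst this
    obtain rfl : k = 0 := Nat.le_zero.mp hk
    simp
  | succ n ih =>
    intro h hm hd hc hr k hk
    have hdeg : h.degree ≠ 0 := by
      intro h0
      have := Polynomial.natDegree_eq_of_degree_eq_some h0
      exact absurd (hd.symm.trans this) (Nat.succ_ne_zero n)
    obtain ⟨z, hz⟩ := IsAlgClosed.exists_aeval_eq_zero ℂ h hdeg
    have hz1 : ¬ 0 < z.im := fun hp => hc z hp hz
    have hz2 : ¬ z.im < 0 := by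
      intro hp
      apply hc (starRingEnd ℂ z) (by simpa using hp)
      rw [Polynomial.aeval_conj, hz]; simp
    have hz0 : z.im = 0 := by linarith [not_lt.mp hz1, not_lt.mp hz2]
    have hzr : z = (z.re : ℂ) := by apply Complex.ext <;> simp [hz0]
    set l := z.re
    have hroot : h.IsRoot l := by
      rw [hzr] at hz
      have : ((h.eval l : ℝ) : ℂ) = 0 := by
        rw [← hz]
        exact (Polynomial.aeval_algebraMap_apply_eq_algebraMap_eval (A := ℂ) l h).symm
      exact_mod_cast this
    obtain ⟨g, hg⟩ := Polynomial.dvd_iff_isRoot.mpr hroot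
    have hl : l < x0 := by
      by_contra hcon
      exact hr l (not_lt.mp hcon) hroot
    have hgm : g.Monic := by
      have := Polynomial.monic_X_sub_C l
      exact this.of_mul_monic_left (hg ▸ hm)
    have hgd : g.natDegree = n := by
      have := (Polynomial.monic_X_sub_C l).natDegree_mul hgm
      rw [← hg, hd, Polynomial.natDegree_X_sub_C] at this
      omega
    have ih' := ih g hgm hgd
      (fun x hx h0 => hc x hx (by rw [hg, map_mul, h0, mul_zero]))
      (fun x hx h0 => hr x hx (by rw [hg, Polynomial.eval_mul, h0, mul_zero]))
    have e : h.comp (Polynomial.X + Polynomial.C x0)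
        = Polynomial.X * (g.comp (Polynomial.X + Polynomial.C x0))
          + Polynomial.C (x0 - l) * (g.comp (Polynomial.X + Polynomial.C x0)) := by
      rw [hg]
      simp
      ring
    rw [e, Polynomial.coeff_add, Polynomial.coeff_C_mul]
    have hnn : ∀ k, 0 ≤ (g.comp (Polynomial.X + Polynomial.C x0)).coeff k := by
      intro k
      by_cases hk : k ≤ n
      · exact (ih' k hk).le
      · rw [Polynomial.coeff_eq_zero_of_natDegree_lt]
        rw [Polynomial.natDegree_comp, Polynomial.natDegree_X_add_C]
        omega
    cases k with
    | zero =>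
      have := ih' 0 (Nat.zero_le _)
      simp only [Polynomial.coeff_X_mul_zero, zero_add]
      exact mul_pos (by linarith) this
    | succ k =>
      rw [Polynomial.coeff_X_mul]
      have := ih' k (by omega)
      have h2 := mul_nonneg (sub_nonneg.mpr hl.le) (hnn (k+1))
      linarith

lemma ks_select_aux (x0 : ℝ) (n : ℕ) (f g : Polynomial ℝ) (hf : f.Monic) (hg : g.Monic)
    (hfn : f.natDegree = n) (hgn : g.natDegree = n)
    (hs : ∀ t : ℝ, 0 ≤ t → t ≤ 1 → ∀ x : ℂ, 0 < x.im →
      (t : ℂ) * Polynomial.aeval x f + (1 - (t : ℂ)) * Polynomial.aeval x g ≠ 0)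
    (hpos : ∀ x : ℝ, x0 ≤ x → 0 < (1/2) * f.eval x + (1 - 1/2) * g.eval x)
    (hf0 : 0 < f.eval x0) :
    ∀ x : ℝ, x0 ≤ x → 0 < f.eval x := by
  classical
  set h : ℝ → Polynomial ℝ := fun t => Polynomial.C t * f + Polynomial.C (1 - t) * g with hh
  have hcf : ∀ t, (h t).coeff n = 1 := by
    intro t
    have h1 : f.coeff n = 1 := by rw [← hfn]; exact hf
    have h2 : g.coeff n = 1 := by rw [← hgn]; exact hg
    simp only [hh, Polynomial.coeff_add, Polynomial.coeff_C_mul, h1, h2]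
    ring
  have hle : ∀ t, (h t).natDegree ≤ n := by
    intro t
    refine (Polynomial.natDegree_add_le _ _).trans (max_le ?_ ?_)
    · exact (Polynomial.natDegree_C_mul_le _ _).trans hfn.le
    · exact (Polynomial.natDegree_C_mul_le _ _).trans hgn.le
  have hdeg : ∀ t, (h t).natDegree = n := fun t =>
    le_antisymm (hle t) (Polynomial.le_natDegree_of_ne_zero (by rw [hcf]; exact one_ne_zero))
  have hmon : ∀ t, (h t).Monic := fun t => by
    rw [Polynomial.Monic, Polynomial.leadingCoeff, hdeg, hcf]
  have hst : ∀ t : ℝ, 0 ≤ t → t ≤ 1 → ∀ x : ℂ, 0 < x.im → Polynomial.aeval x (h t) ≠ 0 := by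
    intro t h0 h1 x hx
    have := hs t h0 h1 x hx
    simpa [hh] using this
  set a : ℝ → ℕ → ℝ := fun t k => ((h t).comp (Polynomial.X + Polynomial.C x0)).coeff k with ha
  have haff : ∀ t k, a t k = t * (f.comp (Polynomial.X + Polynomial.C x0)).coeff k
      + (1 - t) * (g.comp (Polynomial.X + Polynomial.C x0)).coeff k := by
    intro t k
    simp only [ha, hh, Polynomial.add_comp, Polynomial.mul_comp, Polynomial.C_comp,
      Polynomial.coeff_add, Polynomial.coeff_C_mul]
  have hcont : ∀ k, Continuous fun t => a t k := by
    intro k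
    simp only [haff]
    fun_prop
  have heval : ∀ t x, (h t).eval x = t * f.eval x + (1 - t) * g.eval x := by
    intro t x; simp [hh]
  -- evaluation from the coefficients
  have hray : ∀ t, (∀ k ≤ n, 0 ≤ a t k) → 0 < (h t).eval x0 →
      ∀ x, x0 ≤ x → 0 < (h t).eval x := by
    intro t hk h0 x hx
    have e : (h t).eval x = ((h t).comp (Polynomial.X + Polynomial.C x0)).eval (x - x0) := by
      simp [Polynomial.eval_comp]
    have e0 : (h t).eval x0 = a t 0 := by
      simp [ha, Polynomial.coeff_zero_eq_eval_zero, Polynomial.eval_comp]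
    have hdc : ((h t).comp (Polynomial.X + Polynomial.C x0)).natDegree < n + 1 := by
      rw [Polynomial.natDegree_comp, Polynomial.natDegree_X_add_C, hdeg]; omega
    rw [e, Polynomial.eval_eq_sum_range' hdc, Finset.sum_range_succ']
    refine add_pos_of_nonneg_of_pos (Finset.sum_nonneg fun k hkk => ?_) ?_
    · exact mul_nonneg (hk _ (by have := Finset.mem_range.mp hkk; omega))
        (pow_nonneg (by linarith) _)
    · rw [e0] at h0
      simpa using h0
  have h0half : 0 < (1/2) * f.eval x0 + (1 - 1/2) * g.eval x0 := hpos x0 le_rfl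
  have hx0 : ∀ t, 1/2 ≤ t → t ≤ 1 → 0 < (h t).eval x0 := by
    intro t h1 h2
    rw [heval]
    have e : t * f.eval x0 + (1 - t) * g.eval x0 = (2 * t - 1) * f.eval x0
      + 2 * (1 - t) * ((1/2) * f.eval x0 + (1 - 1/2) * g.eval x0) := by ring
    rw [e]
    rcases eq_or_lt_of_le h2 with h3 | h3
    · subst h3; linarith
    · exact add_pos_of_nonneg_of_pos (mul_nonneg (by linarith) hf0.le)
        (mul_pos (by linarith) h0half)
  have key : Set.Icc (1/2 : ℝ) 1 ⊆ {t | ∀ k ≤ n, 0 ≤ a t k} := by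
    apply IsClosed.Icc_subset_of_forall_exists_gt
    · refine IsClosed.inter ?_ isClosed_Icc
      simp only [Set.ofPred_forall]
      exact isClosed_iInter fun k => isClosed_iInter fun _ =>
        isClosed_le continuous_const (hcont k)
    · intro k hk
      refine (ks_taylor_pos x0 n (h (1/2)) (hmon _) (hdeg _)
        (hst _ (by norm_num) (by norm_num)) ?_ k hk).le
      intro x hx
      have := hpos x hx
      rw [heval]
      exact this.ne'
    · rintro t ⟨ht, ht1, ht2⟩ y hy
      have hp := ks_taylor_pos x0 n (h t) (hmon _) (hdeg _)
        (hst _ (by linarith) ht2.le) (fun x hx => (hray t ht (hx0 t ht1 ht2.le) x hx).ne')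
      have hev : ∀ᶠ s in nhds t, ∀ k ∈ Finset.range (n+1), 0 < a s k := by
        rw [Filter.eventually_all_finset]
        intro k hk
        exact (hcont k).continuousAt.eventually
          (lt_mem_nhds (hp k (by have := Finset.mem_range.mp hk; omega)))
      have hev2 : ∀ᶠ s in nhdsWithin t (Set.Ioi t), ∀ k ∈ Finset.range (n+1), 0 < a s k :=
        hev.filter_mono nhdsWithin_le_nhds
      have hev3 : ∀ᶠ s in nhdsWithin t (Set.Ioi t), s ∈ Set.Ioc t y :=
        Ioc_mem_nhdsGT hy
      obtain ⟨s, hs1, hs2⟩ := (hev2.and hev3).exists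
      exact ⟨s, fun k hk => (hs1 k (Finset.mem_range.mpr (by omega))).le, hs2⟩
  have h1 : (1:ℝ) ∈ {t | ∀ k ≤ n, 0 ≤ a t k} := key ⟨by norm_num, le_rfl⟩
  intro x hx
  have := hray 1 h1 (hx0 1 (by norm_num) le_rfl) x hx
  rw [heval] at this
  simpa using this

lemma ks_select (x0 : ℝ) (n : ℕ) (f g : Polynomial ℝ) (hf : f.Monic) (hg : g.Monic)
    (hfn : f.natDegree = n) (hgn : g.natDegree = n)
    (hs : ∀ t : ℝ, 0 ≤ t → t ≤ 1 → ∀ x : ℂ, 0 < x.im →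
      (t : ℂ) * Polynomial.aeval x f + (1 - (t : ℂ)) * Polynomial.aeval x g ≠ 0)
    (hpos : ∀ x : ℝ, x0 ≤ x → 0 < (1/2) * f.eval x + (1 - 1/2) * g.eval x) :
    (∀ x : ℝ, x0 ≤ x → 0 < f.eval x) ∨ (∀ x : ℝ, x0 ≤ x → 0 < g.eval x) := by
  by_cases hf0 : 0 < f.eval x0
  · exact Or.inl (ks_select_aux x0 n f g hf hg hfn hgn hs hpos hf0)
  · right
    refine ks_select_aux x0 n g f hg hf hgn hfn ?_ ?_ ?_
    · intro t h0 h1 x hx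
      have := hs (1 - t) (by linarith) (by linarith) x hx
      intro hcon
      apply this
      push_cast
      rw [← hcon]; ring
    · intro x hx
      have := hpos x hx
      linarith
    · have := hpos x0 le_rfl
      linarith [not_lt.mp hf0]

/-- averaged substitution operator -/
noncomputable def ksT (t : ℝ) (i : ℕ) (φ : (ℕ → ℂ) → (ℕ → ℂ) → ℂ) :
    (ℕ → ℂ) → (ℕ → ℂ) → ℂ :=
  fun z y => (t : ℂ) * φ (z + Pi.single i (-2)) y + (1 - (t : ℂ)) * φ z (y + Pi.single i (-2))

/-- diagonal derivative -/
noncomputable def ksD (i : ℕ) (φ : (ℕ → ℂ) → (ℕ → ℂ) → ℂ) :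
    (ℕ → ℂ) → (ℕ → ℂ) → ℂ :=
  fun z y => φ (z + Pi.single i 1) y + φ z (y + Pi.single i 1) - 2 * φ z y

/-- mixed second difference -/
noncomputable def ksE (i : ℕ) (φ : (ℕ → ℂ) → (ℕ → ℂ) → ℂ) :
    (ℕ → ℂ) → (ℕ → ℂ) → ℂ :=
  fun z y => φ (z + Pi.single i 1) (y + Pi.single i 1) - φ (z + Pi.single i 1) y
    - φ z (y + Pi.single i 1) + φ z y

/-- real vectors as complex vectors -/
def ksR (z : ℕ → ℝ) : ℕ → ℂ := fun k => (z k : ℂ)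

lemma ksR_add (z y : ℕ → ℝ) : ksR (z + y) = ksR z + ksR y := by
  funext k; simp [ksR]

lemma ksR_single (i : ℕ) (s : ℝ) : ksR (Pi.single i s) = Pi.single i (s : ℂ) := by
  funext k
  by_cases h : k = i
  · subst h; simp [ksR]
  · simp [ksR, h]

structure KsAff (φ : (ℕ → ℂ) → (ℕ → ℂ) → ℂ) : Prop where
  fst : ∀ z y i s, φ (z + Pi.single i s) y = φ z y + s * (φ (z + Pi.single i 1) y - φ z y)
  snd : ∀ z y i s, φ z (y + Pi.single i s) = φ z y + s * (φ z (y + Pi.single i 1) - φ z y)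

def KsStab (c : ℝ) (φ : (ℕ → ℂ) → (ℕ → ℂ) → ℂ) : Prop :=
  ∀ z y : ℕ → ℂ, (∀ i, c ≤ (z i).im) → (∀ i, c ≤ (y i).im) → φ z y ≠ 0

def KsReal (φ : (ℕ → ℂ) → (ℕ → ℂ) → ℂ) : Prop :=
  ∀ z y : ℕ → ℝ, (φ (ksR z) (ksR y)).im = 0

lemma KsAff.T {φ} (h : KsAff φ) (t : ℝ) (j : ℕ) : KsAff (ksT t j φ) := by
  constructor
  · intro z y i s
    simp only [ksT]
    rw [add_right_comm z (Pi.single i s), h.fst _ _ i s, h.fst z (y + Pi.single j (-2)) i s,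
      add_right_comm z (Pi.single i 1)]
    ring
  · intro z y i s
    simp only [ksT]
    rw [add_right_comm y (Pi.single i s), h.snd _ _ i s, h.snd z (y + Pi.single j (-2)) i s,
      add_right_comm y (Pi.single i 1)]
    ring

lemma KsAff.D {φ} (h : KsAff φ) (j : ℕ) : KsAff (ksD j φ) := by
  constructor
  · intro z y i s
    simp only [ksD]
    rw [add_right_comm z (Pi.single i s), h.fst _ _ i s, h.fst z (y + Pi.single j 1) i s,
      h.fst z y i s, add_right_comm z (Pi.single i 1)]
    ring
  · intro z y i s
    simp only [ksD]
    rw [add_right_comm y (Pi.single i s), h.snd _ _ i s, h.snd z (y + Pi.single j 1) i s,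
      h.snd z y i s, add_right_comm y (Pi.single i 1)]
    ring

lemma KsReal.T {φ} (h : KsReal φ) (t : ℝ) (j : ℕ) : KsReal (ksT t j φ) := by
  intro z y
  have e : ∀ z, ksR z + Pi.single j (-2) = ksR (z + Pi.single j (-2)) := by
    intro z; rw [ksR_add, ksR_single]; simp
  simp only [ksT, e]
  have e1 := h (z + Pi.single j (-2)) y
  have e2 := h z (y + Pi.single j (-2))
  simp [Complex.add_im, Complex.mul_im, e1, e2]

lemma KsReal.D {φ} (h : KsReal φ) (j : ℕ) : KsReal (ksD j φ) := by
  intro z y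
  have e : ∀ z, ksR z + Pi.single j 1 = ksR (z + Pi.single j 1) := by
    intro z; rw [ksR_add, ksR_single]; simp
  simp only [ksD, e]
  have e1 := h (z + Pi.single j 1) y
  have e2 := h z (y + Pi.single j 1)
  have e3 := h z y
  simp [Complex.add_im, Complex.mul_im, e1, e2, e3]

lemma KsReal.E {φ} (h : KsReal φ) (j : ℕ) : KsReal (ksE j φ) := by
  intro z y
  have e : ∀ z, ksR z + Pi.single j 1 = ksR (z + Pi.single j 1) := by
    intro z; rw [ksR_add, ksR_single]; simp
  simp only [ksE, e]
  have e1 := h (z + Pi.single j 1) y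
  have e2 := h z (y + Pi.single j 1)
  have e3 := h z y
  have e4 := h (z + Pi.single j 1) (y + Pi.single j 1)
  simp [e1, e2, e3, e4]

def KsCont (φ : (ℕ → ℂ) → (ℕ → ℂ) → ℂ) : Prop :=
  Continuous fun p : (ℕ → ℂ) × (ℕ → ℂ) => φ p.1 p.2

lemma KsCont.comp {φ} (h : KsCont φ) {X : Type*} [TopologicalSpace X] {f g : X → (ℕ → ℂ)}
    (hf : Continuous f) (hg : Continuous g) : Continuous fun x => φ (f x) (g x) :=
  Continuous.comp (g := fun p : (ℕ → ℂ) × (ℕ → ℂ) => φ p.1 p.2) h (hf.prodMk hg)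

lemma KsCont.T {φ} (h : KsCont φ) (t : ℝ) (j : ℕ) : KsCont (ksT t j φ) := by
  unfold KsCont ksT
  have h1 : Continuous fun p : (ℕ → ℂ) × (ℕ → ℂ) => φ (p.1 + Pi.single j (-2)) p.2 :=
    h.comp (by fun_prop) (by fun_prop)
  have h2 : Continuous fun p : (ℕ → ℂ) × (ℕ → ℂ) => φ p.1 (p.2 + Pi.single j (-2)) :=
    h.comp (by fun_prop) (by fun_prop)
  exact (continuous_const.mul h1).add (continuous_const.mul h2)

lemma KsCont.D {φ} (h : KsCont φ) (j : ℕ) : KsCont (ksD j φ) := by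
  unfold KsCont ksD
  have h0 : Continuous fun p : (ℕ → ℂ) × (ℕ → ℂ) => φ p.1 p.2 := h
  have h1 : Continuous fun p : (ℕ → ℂ) × (ℕ → ℂ) => φ (p.1 + Pi.single j 1) p.2 :=
    h.comp (by fun_prop) (by fun_prop)
  have h2 : Continuous fun p : (ℕ → ℂ) × (ℕ → ℂ) => φ p.1 (p.2 + Pi.single j 1) :=
    h.comp (by fun_prop) (by fun_prop)
  fun_prop

lemma ks_ratio (c r : ℂ) (h : ∀ s : ℂ, 0 ≤ s.im → c + s * r ≠ 0) : r = 0 ∨ (r / c).im < 0 := by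
  by_cases hr : r = 0
  · exact Or.inl hr
  right
  have h1 : (-c / r).im < 0 := by
    by_contra hcon
    apply h (-c / r) (not_lt.mp hcon)
    field_simp
    ring
  have h2 : 0 < (c / r).im := by
    rw [neg_div, Complex.neg_im] at h1; linarith
  rw [← inv_div, Complex.inv_im]
  apply div_neg_of_neg_of_pos (by linarith)
  rw [Complex.normSq_pos]
  intro h0
  rw [h0] at h2; simp at h2

lemma ks_ratio_fst {φ} (h : KsAff φ) {c : ℝ} (hs : KsStab c φ) {z y : ℕ → ℂ}
    (hz : ∀ i, c ≤ (z i).im) (hy : ∀ i, c ≤ (y i).im) (i : ℕ) :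
    φ (z + Pi.single i 1) y - φ z y = 0 ∨
      ((φ (z + Pi.single i 1) y - φ z y) / φ z y).im < 0 := by
  apply ks_ratio
  intro s hs0
  rw [← h.fst]
  apply hs _ _ _ hy
  intro k
  by_cases hk : k = i
  · subst hk; simp; linarith [hz k]
  · simp [hk, hz k]

lemma ks_ratio_snd {φ} (h : KsAff φ) {c : ℝ} (hs : KsStab c φ) {z y : ℕ → ℂ}
    (hz : ∀ i, c ≤ (z i).im) (hy : ∀ i, c ≤ (y i).im) (i : ℕ) :
    φ z (y + Pi.single i 1) - φ z y = 0 ∨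
      ((φ z (y + Pi.single i 1) - φ z y) / φ z y).im < 0 := by
  apply ks_ratio
  intro s hs0
  rw [← h.snd]
  apply hs _ _ hz
  intro k
  by_cases hk : k = i
  · subst hk; simp; linarith [hy k]
  · simp [hk, hy k]

lemma KsStab.T {φ} (h : KsAff φ) {c : ℝ} (hs : KsStab c φ) {t : ℝ} (t0 : 0 ≤ t) (t1 : t ≤ 1)
    (i : ℕ) : KsStab c (ksT t i φ) := by
  intro z y hz hy
  have h0 : φ z y ≠ 0 := hs z y hz hy
  have r1 := ks_ratio_fst h hs hz hy i
  have r2 := ks_ratio_snd h hs hz hy i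
  simp only [ksT]
  rw [h.fst, h.snd]
  set c0 := φ z y
  set d1 := φ (z + Pi.single i 1) y - c0
  set d2 := φ z (y + Pi.single i 1) - c0
  intro hcon
  have e : 1 - 2 * (t : ℂ) * (d1 / c0) - 2 * ((1 - t : ℝ) : ℂ) * (d2 / c0) = 0 := by
    have : c0 * (1 - 2 * (t : ℂ) * (d1 / c0) - 2 * ((1 - t : ℝ) : ℂ) * (d2 / c0)) = 0 := by
      rw [← hcon]; field_simp; push_cast; ring
    exact (mul_eq_zero.mp this).resolve_left h0
  have him : t * (d1 / c0).im + (1 - t) * (d2 / c0).im = 0 := by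
    have := congrArg Complex.im e
    simp [Complex.mul_im] at this
    linarith
  have hre : 1 - 2 * (t * (d1 / c0).re) - 2 * ((1 - t) * (d2 / c0).re) = 0 := by
    have := congrArg Complex.re e
    simp [Complex.mul_re] at this
    linarith
  have n1 : (d1 / c0).im ≤ 0 := by
    rcases r1 with r1 | r1
    · simp [r1]
    · exact r1.le
  have n2 : (d2 / c0).im ≤ 0 := by
    rcases r2 with r2 | r2
    · simp [r2]
    · exact r2.le
  have m1 := mul_nonneg t0 (neg_nonneg.mpr n1)
  have m2 := mul_nonneg (sub_nonneg.mpr t1) (neg_nonneg.mpr n2)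
  have z1 : t * (d1 / c0).re = 0 := by
    rcases r1 with r1 | r1
    · simp [r1]
    · have : t = 0 := by
        by_contra hne
        have := mul_pos (lt_of_le_of_ne t0 (Ne.symm hne)) (neg_pos.mpr r1)
        linarith
      simp [this]
  have z2 : (1 - t) * (d2 / c0).re = 0 := by
    rcases r2 with r2 | r2
    · simp [r2]
    · have : 1 - t = 0 := by
        by_contra hne
        have := mul_pos (lt_of_le_of_ne (sub_nonneg.mpr t1) (Ne.symm hne)) (neg_pos.mpr r2)
        linarith
      simp [this]
  rw [z1, z2] at hre
  norm_num at hre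

/-- bi-affine expansion -/
lemma KsAff.expand {φ} (h : KsAff φ) (z : ℕ → ℂ) (i : ℕ) (s : ℂ) :
    φ (z + Pi.single i s) (z + Pi.single i s)
      = φ z z + ksD i φ z z * s + ksE i φ z z * s ^ 2 := by
  rw [h.fst, h.snd z z, h.snd (z + Pi.single i 1) z]
  simp only [ksD, ksE]
  ring

lemma KsAff.T_diag {φ} (h : KsAff φ) (z : ℕ → ℂ) (i : ℕ) (s : ℂ) :
    ksT (1/2) i φ (z + Pi.single i s) (z + Pi.single i s)
      = φ z z + ksD i φ z z * (s - 1) + ksE i φ z z * (s * (s - 2)) := by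
  simp only [ksT]
  rw [add_assoc z, ← Pi.single_add, h.fst, h.snd z z, h.snd (z + Pi.single i 1) z,
    h.fst z _ i s, h.snd z z i (s + -2), h.snd (z + Pi.single i 1) z i (s + -2)]
  simp only [ksD, ksE]
  push_cast
  ring

lemma ksD_T (t : ℝ) (i j : ℕ) (φ) : ksD j (ksT t i φ) = ksT t i (ksD j φ) := by
  funext z y
  simp only [ksD, ksT]
  rw [add_right_comm z (Pi.single j 1), add_right_comm y (Pi.single j 1)]
  ring

lemma ks_bez_complex {φ} (h : KsAff φ) (hc : KsCont φ) (hs : ∀ c, 0 < c → KsStab c φ)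
    (j : ℕ) (w : ℕ → ℂ) (hw : ∀ k, 0 ≤ (w k).im) :
    (ksD j φ w w * (starRingEnd ℂ) (φ w w)).im ≤ 0 := by
  have key : ∀ c : ℝ, 0 < c → (ksD j φ (w + fun _ => (c : ℂ) * Complex.I)
      (w + fun _ => (c : ℂ) * Complex.I) * (starRingEnd ℂ)
        (φ (w + fun _ => (c : ℂ) * Complex.I) (w + fun _ => (c : ℂ) * Complex.I))).im ≤ 0 := by
    intro c hc0
    set v := w + fun _ => (c : ℂ) * Complex.I
    have hv : ∀ k, c ≤ (v k).im := by
      intro k; simp [v, hw k]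
    have h0 := hs c hc0 v v hv hv
    have r1 := ks_ratio_fst h (hs c hc0) hv hv j
    have r2 := ks_ratio_snd h (hs c hc0) hv hv j
    have e : ksD j φ v v * (starRingEnd ℂ) (φ v v)
        = ((Complex.normSq (φ v v) : ℝ) : ℂ) * ((φ (v + Pi.single j 1) v - φ v v) / φ v v
          + (φ v (v + Pi.single j 1) - φ v v) / φ v v) := by
      rw [← Complex.mul_conj]
      simp only [ksD]
      field_simp
      ring
    rw [e, Complex.im_ofReal_mul]
    have n1 : ((φ (v + Pi.single j 1) v - φ v v) / φ v v).im ≤ 0 := by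
      rcases r1 with r1 | r1
      · rw [r1]; simp
      · exact r1.le
    have n2 : ((φ v (v + Pi.single j 1) - φ v v) / φ v v).im ≤ 0 := by
      rcases r2 with r2 | r2
      · rw [r2]; simp
      · exact r2.le
    rw [Complex.add_im]
    exact mul_nonpos_of_nonneg_of_nonpos (Complex.normSq_nonneg _) (by linarith)
  have hcw : Continuous fun c : ℝ => (w + fun _ => (c : ℂ) * Complex.I : ℕ → ℂ) := by fun_prop
  have hcont : Continuous fun c : ℝ => (ksD j φ (w + fun _ => (c : ℂ) * Complex.I)
      (w + fun _ => (c : ℂ) * Complex.I) * (starRingEnd ℂ)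
        (φ (w + fun _ => (c : ℂ) * Complex.I) (w + fun _ => (c : ℂ) * Complex.I))).im := by
    have h1 := (hc.D j).comp hcw hcw
    have h2 := hc.comp hcw hcw
    exact Complex.continuous_im.comp (h1.mul (Complex.continuous_conj.comp h2))
  have ht := (hcont.tendsto 0).mono_left (nhdsWithin_le_nhds (s := Set.Ioi 0))
  have := le_of_tendsto ht (by
    filter_upwards [self_mem_nhdsWithin] with c hc0 using key c hc0)
  have e : (w + fun _ => ((0:ℝ) : ℂ) * Complex.I : ℕ → ℂ) = w := by
    funext k; simp
  rwa [e] at this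

lemma ks_real_eq {φ} (h : KsReal φ) (z : ℕ → ℝ) :
    φ (ksR z) (ksR z) = (((φ (ksR z) (ksR z)).re : ℝ) : ℂ) := by
  apply Complex.ext
  · simp
  · simp [h z z]

lemma ks_bez {φ} (h : KsAff φ) (hc : KsCont φ) (hs : ∀ c, 0 < c → KsStab c φ)
    (i j : ℕ) (z : ℕ → ℝ) {A B C A' B' C' : ℝ}
    (hC : φ (ksR z) (ksR z) = C) (hB : ksD i φ (ksR z) (ksR z) = B)
    (hA : ksE i φ (ksR z) (ksR z) = A)
    (hC' : ksD j φ (ksR z) (ksR z) = C') (hB' : ksD i (ksD j φ) (ksR z) (ksR z) = B')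
    (hA' : ksE i (ksD j φ) (ksR z) (ksR z) = A') (σ : ℝ) :
    0 ≤ (B * C' - B' * C) + 2 * σ * (A * C' - A' * C) + σ ^ 2 * (A * B' - A' * B) := by
  have key : ∀ τ : ℝ, 0 < τ → 0 ≤ (B * C' - B' * C) + 2 * σ * (A * C' - A' * C)
      + (σ ^ 2 + τ ^ 2) * (A * B' - A' * B) := by
    intro τ hτ
    have := ks_bez_complex h hc hs j (ksR z + Pi.single i ((σ : ℂ) + τ * Complex.I)) (by
      intro k
      by_cases hk : k = i
      · subst hk; simp [ksR, hτ.le]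
      · simp [ksR, hk])
    rw [h.expand, (h.D j).expand, hC, hB, hA, hC', hB', hA'] at this
    have e : (((C' : ℂ) + B' * ((σ : ℂ) + τ * Complex.I) + A' * ((σ : ℂ) + τ * Complex.I) ^ 2)
      * (starRingEnd ℂ) ((C : ℂ) + B * ((σ : ℂ) + τ * Complex.I)
        + A * ((σ : ℂ) + τ * Complex.I) ^ 2)).im = - (τ * ((B * C' - B' * C)
          + 2 * σ * (A * C' - A' * C) + (σ ^ 2 + τ ^ 2) * (A * B' - A' * B))) := by
      simp [Complex.mul_im, Complex.mul_re, pow_two]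
      ring
    rw [e] at this
    by_contra hcon
    nlinarith
  have hcont : Continuous fun τ : ℝ => (B * C' - B' * C) + 2 * σ * (A * C' - A' * C)
      + (σ ^ 2 + τ ^ 2) * (A * B' - A' * B) := by fun_prop
  have ht := (hcont.tendsto 0).mono_left (nhdsWithin_le_nhds (s := Set.Ioi 0))
  have := ge_of_tendsto ht (by
    filter_upwards [self_mem_nhdsWithin] with c hc0 using key c hc0)
  simpa using this

lemma ks_psd {a b c : ℝ} (h : ∀ σ : ℝ, 0 ≤ a + 2 * σ * b + σ ^ 2 * c) :
    0 ≤ a ∧ 0 ≤ c ∧ b ^ 2 ≤ a * c := by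
  have h0 := h 0
  have hd := discrim_le_zero (a := c) (b := 2 * b) (c := a) (fun x => by have := h x; linarith)
  rw [discrim] at hd
  have ha : 0 ≤ a := by simpa using h0
  have hbc : b ^ 2 ≤ a * c := by linarith
  refine ⟨ha, ?_, hbc⟩
  by_contra hc
  push Not at hc
  have hab : b = 0 := by nlinarith [mul_nonneg ha (neg_nonneg.mpr hc.le), sq_nonneg b]
  subst hab
  have h1 := h (1 + a / (-c))
  have e : (1 + a / (-c)) * c = c - a := by field_simp [hc.ne]; ring
  have h2 : 0 ≤ a / (-c) := div_nonneg ha (by linarith)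
  nlinarith

lemma ks_alg {A B C A' B' C' β δ : ℝ} (hC : 0 < C) (hA : 0 ≤ A) (hB : 0 ≤ B)
    (hdisc : 4 * A * C ≤ B ^ 2)
    (hW : ∀ σ : ℝ, 0 ≤ (B * C' - B' * C) + 2 * σ * (A * C' - A' * C) + σ ^ 2 * (A * B' - A' * B))
    (hBC : B ≤ β * C) (hβ : β * δ ≤ δ - 1) (hδ : 1 < δ) (hC' : C' ≤ β * C) :
    0 < C + B * (δ - 1) + A * (δ * (δ - 2)) ∧
    C' + B' * (δ - 1) + A' * (δ * (δ - 2)) ≤ β * (C + B * (δ - 1) + A * (δ * (δ - 2))) := by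
  obtain ⟨w01, w12, w02⟩ := ks_psd hW
  have pl : A * (B * C' - B' * C) - B * (A * C' - A' * C) + C * (A * B' - A' * B) = 0 := by ring
  have hβ0 : 0 ≤ β := by
    by_contra hcon
    push Not at hcon
    nlinarith
  have hδB : δ * B ≤ (δ - 1) * C := by nlinarith
  set W01 := B * C' - B' * C with hW01
  set W02 := A * C' - A' * C with hW02
  set W12 := A * B' - A' * B with hW12
  have hAδ : 4 * A * δ ≤ B * (δ - 1) := by
    have : (4 * A * δ) * C ≤ (B * (δ - 1)) * C := by nlinarith
    exact le_of_mul_le_mul_right this hC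
  have hD : 0 < C + B * (δ - 1) + A * (δ * (δ - 2)) := by
    have h1 : 0 ≤ A * δ := mul_nonneg hA (by linarith)
    nlinarith [mul_nonneg h1 (by linarith : (0:ℝ) ≤ δ - 1)]
  have hW02n : 0 ≤ W02 := by
    rcases eq_or_lt_of_le hB with hB0 | hB0
    · have h1 : C * W12 ≤ 0 := by
        have := mul_nonneg hA w01
        rw [← hB0] at pl; linarith
      have h2 : W12 = 0 := by
        by_contra hne
        have := mul_pos hC (lt_of_le_of_ne w12 (Ne.symm hne))
        linarith
      rw [h2] at w02
      have : W02 ^ 2 = 0 := le_antisymm (by linarith) (sq_nonneg _)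
      rw [pow_eq_zero_iff (by norm_num)] at this
      exact this.ge
    · have h1 : 0 ≤ B * W02 := by
        have := mul_nonneg hA w01
        have := mul_nonneg hC.le w12
        linarith
      exact nonneg_of_mul_nonneg_right h1 hB0
  have hconv : C * W02 ≤ B * W01 := by
    rcases eq_or_lt_of_le hW02n with h0 | h0
    · rw [← h0, mul_zero]; exact mul_nonneg hB w01
    · have h1 : C * W12 ≤ B * W02 := by
        have := mul_nonneg hA w01
        linarith
      have h2 : (C * W02) * W02 ≤ (B * W01) * W02 := by
        have h3 := mul_le_mul_of_nonneg_left w02 hC.le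
        have h4 := mul_le_mul_of_nonneg_left h1 w01
        nlinarith
      exact le_of_mul_le_mul_right h2 h0
  refine ⟨hD, ?_⟩
  have h5 : δ * W02 ≤ W01 * (δ - 1) := by
    have h6 : (δ * W02) * C ≤ (W01 * (δ - 1)) * C := by
      have h7 := mul_le_mul_of_nonneg_left hδB w01
      have h8 := mul_le_mul_of_nonneg_left hconv (by linarith : (0:ℝ) ≤ δ)
      nlinarith
    exact le_of_mul_le_mul_right h6 hC
  have h9 : 0 ≤ W01 * (δ - 1) + W02 * (δ * (δ - 2)) := by
    have := mul_nonneg hW02n (mul_nonneg (by linarith : (0:ℝ) ≤ δ) (by linarith : (0:ℝ) ≤ δ - 1))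
    nlinarith
  have h10 : (C' + B' * (δ - 1) + A' * (δ * (δ - 2))) * C
      ≤ (C + B * (δ - 1) + A * (δ * (δ - 2))) * C' := by
    have : (C + B * (δ - 1) + A * (δ * (δ - 2))) * C'
      - (C' + B' * (δ - 1) + A' * (δ * (δ - 2))) * C
        = W01 * (δ - 1) + W02 * (δ * (δ - 2)) := by
      rw [hW01, hW02]; ring
    linarith
  have h11 := mul_le_mul_of_nonneg_left hC' hD.le
  refine le_of_mul_le_mul_right (h10.trans (h11.trans (le_of_eq ?_))) hC
  ring

def KsInv (φ : (ℕ → ℂ) → (ℕ → ℂ) → ℂ) (β : ℝ) (z : ℕ → ℝ) : Prop :=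
  ∀ t : ℕ → ℝ, (∀ k, 0 ≤ t k) → 0 < (φ (ksR (z + t)) (ksR (z + t))).re ∧
    ∀ j, (ksD j φ (ksR (z + t)) (ksR (z + t))).re ≤ β * (φ (ksR (z + t)) (ksR (z + t))).re

lemma KsInv.step {φ} (h : KsAff φ) (hc : KsCont φ) (hr : KsReal φ)
    (hs : ∀ c, 0 < c → KsStab c φ) {β δ : ℝ} (hβ : β * δ ≤ δ - 1) (hδ : 1 < δ)
    {z : ℕ → ℝ} (hI : KsInv φ β z) (i : ℕ) : KsInv (ksT (1/2) i φ) β (z + Pi.single i δ) := by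
  intro t ht
  have e : ksR (z + Pi.single i δ + t) = ksR (z + t) + Pi.single i (δ : ℂ) := by
    rw [add_right_comm, ksR_add (z + t), ksR_single]
  obtain ⟨hpos, hD⟩ := hI t ht
  have hCe := ks_real_eq hr (z + t)
  have hBe := ks_real_eq (hr.D i) (z + t)
  have hAe := ks_real_eq (hr.E i) (z + t)
  set C := (φ (ksR (z + t)) (ksR (z + t))).re
  set B := (ksD i φ (ksR (z + t)) (ksR (z + t))).re with hBdef
  set A := (ksE i φ (ksR (z + t)) (ksR (z + t))).re
  -- positivity along the ray
  have hray : ∀ s : ℝ, 0 ≤ s → 0 < C + B * s + A * s ^ 2 := by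
    intro s hs0
    have := (hI (t + Pi.single i s) (by
      intro k
      by_cases hk : k = i
      · subst hk; simp; linarith [ht k]
      · simp [hk, ht k])).1
    rw [← add_assoc, ksR_add (z + t), ksR_single, h.expand, hCe, hBe, hAe] at this
    have e2 : ((C : ℂ) + B * s + A * (s : ℂ) ^ 2) = ((C + B * s + A * s ^ 2 : ℝ) : ℂ) := by
      push_cast; ring
    rw [e2, Complex.ofReal_re] at this
    exact this
  have hdisc0 : A ≠ 0 → 4 * A * C ≤ B ^ 2 := by
    intro hA0
    have hBB : ksD i (ksD i φ) (ksR (z + t)) (ksR (z + t)) = ((2 * A : ℝ) : ℂ) := by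
      push_cast
      rw [← hAe]
      have e1 := h.fst (ksR (z + t)) (ksR (z + t)) i 2
      have e2 := h.snd (ksR (z + t)) (ksR (z + t)) i 2
      simp only [ksD, ksE]
      rw [add_assoc, ← Pi.single_add, one_add_one_eq_two, e1, e2]
      ring
    have hAA : ksE i (ksD i φ) (ksR (z + t)) (ksR (z + t)) = ((0 : ℝ) : ℂ) := by
      have e1 := fun y => h.fst (ksR (z + t)) y i 2
      have e2 := fun y => h.snd y (ksR (z + t)) i 2
      simp only [ksD, ksE]
      rw [add_assoc, ← Pi.single_add, one_add_one_eq_two, e1, e1, e2, e2]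
      push_cast
      ring
    have hb := ks_bez h hc hs i i (z + t) hCe hBe hAe hBe hBB hAA
    obtain ⟨-, -, h3⟩ := ks_psd hb
    have hAsq : 0 < A ^ 2 := by positivity
    have : A ^ 2 * (4 * A * C) ≤ A ^ 2 * B ^ 2 := by nlinarith
    exact le_of_mul_le_mul_left this hAsq
  have hA0 : 0 ≤ A := by
    by_contra hcon
    push Not at hcon
    have h1 := hray ((|B| + C + 1) / (-A) + 1) (by
      have : 0 ≤ (|B| + C + 1) / (-A) := by
        apply div_nonneg _ (by linarith)
        have := abs_nonneg B
        linarith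
      linarith)
    set s := (|B| + C + 1) / (-A) + 1 with hsdef
    have hs1 : A * s = A - (|B| + C + 1) := by
      rw [hsdef]; field_simp [hcon.ne]; ring
    have hs2 : 1 ≤ s := by
      have : 0 ≤ (|B| + C + 1) / (-A) := by
        apply div_nonneg _ (by linarith)
        have := abs_nonneg B
        linarith
      linarith
    have h2 : C + B * s + A * s ^ 2 = C + s * (B + A * s) := by ring
    rw [h2, hs1] at h1
    have h3 : B ≤ |B| := le_abs_self B
    nlinarith
  have hdisc : 4 * A * C ≤ B ^ 2 := by
    by_cases hA00 : A = 0
    · rw [hA00]; nlinarith [sq_nonneg B]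
    · exact hdisc0 hA00
  have hB0 : 0 ≤ B := by
    by_contra hcon
    push Not at hcon
    by_cases hA00 : A = 0
    · have h1 := hray (C / (-B)) (div_nonneg hpos.le (by linarith))
      have : B * (C / (-B)) = -C := by field_simp [hcon.ne]
      rw [this, hA00] at h1
      linarith
    · have hAp : 0 < A := lt_of_le_of_ne hA0 (Ne.symm hA00)
      have h1 := hray ((-B) / (2 * A)) (div_nonneg (by linarith) (by linarith))
      have e2 : C + B * ((-B) / (2 * A)) + A * ((-B) / (2 * A)) ^ 2
          = (4 * A * C - B ^ 2) / (4 * A) := by field_simp; ring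
      rw [e2] at h1
      have := div_nonpos_of_nonpos_of_nonneg (by linarith : 4 * A * C - B ^ 2 ≤ 0)
        (by linarith : 0 ≤ 4 * A)
      linarith
  have main : ∀ j, 0 < C + B * (δ - 1) + A * (δ * (δ - 2)) ∧
      (ksD j (ksT (1/2) i φ) (ksR (z + t) + Pi.single i (δ : ℂ))
        (ksR (z + t) + Pi.single i (δ : ℂ))).re
        ≤ β * (C + B * (δ - 1) + A * (δ * (δ - 2))) := by
    intro j
    have hCe' := ks_real_eq (hr.D j) (z + t)
    have hBe' := ks_real_eq ((hr.D j).D i) (z + t)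
    have hAe' := ks_real_eq ((hr.D j).E i) (z + t)
    have hb := ks_bez h hc hs i j (z + t) hCe hBe hAe hCe' hBe' hAe'
    have := ks_alg hpos hA0 hB0 hdisc hb (hD i) hβ hδ (hD j)
    rw [ksD_T, (h.D j).T_diag, hCe', hBe', hAe']
    refine ⟨this.1, le_trans (le_of_eq ?_) this.2⟩
    rw [← Complex.ofReal_re (_ + _)]
    congr 1
    push_cast
    ring
  have hq : (ksT (1/2) i φ (ksR (z + t) + Pi.single i (δ : ℂ))
      (ksR (z + t) + Pi.single i (δ : ℂ))).re = C + B * (δ - 1) + A * (δ * (δ - 2)) := by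
    rw [h.T_diag, hCe, hBe, hAe]
    rw [← Complex.ofReal_re (C + _ + _)]
    congr 1
    push_cast
    ring
  rw [e, hq]
  exact ⟨(main 0).1, fun j => (main j).2⟩

/-- iterated operator -/
noncomputable def ksIter (φ : (ℕ → ℂ) → (ℕ → ℂ) → ℂ) : ℕ → (ℕ → ℂ) → (ℕ → ℂ) → ℂ
  | 0 => φ
  | k + 1 => ksT (1/2) k (ksIter φ k)

lemma ksIter_aff {φ} (h : KsAff φ) (k : ℕ) : KsAff (ksIter φ k) := by
  induction k with
  | zero => exact h
  | succ k ih => exact ih.T _ _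

lemma ksIter_cont {φ} (h : KsCont φ) (k : ℕ) : KsCont (ksIter φ k) := by
  induction k with
  | zero => exact h
  | succ k ih => exact ih.T _ _

lemma ksIter_real {φ} (h : KsReal φ) (k : ℕ) : KsReal (ksIter φ k) := by
  induction k with
  | zero => exact h
  | succ k ih => exact ih.T _ _

lemma ksIter_stab {φ} (h : KsAff φ) {c : ℝ} (hs : KsStab c φ) (k : ℕ) :
    KsStab c (ksIter φ k) := by
  induction k with
  | zero => exact hs
  | succ k ih => exact KsStab.T (ksIter_aff h k) ih (by norm_num) (by norm_num) _

lemma ks_barrier {φ} (h : KsAff φ) (hc : KsCont φ) (hr : KsReal φ)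
    (hs : ∀ c, 0 < c → KsStab c φ) {β δ : ℝ} (hβ : β * δ ≤ δ - 1) (hδ : 1 < δ) (N : ℕ)
    (hI : KsInv φ β (fun i => if i < N then -δ else 0)) :
    0 < (ksIter φ N 0 0).re := by
  have key : ∀ k ≤ N, KsInv (ksIter φ k) β (fun i => if k ≤ i ∧ i < N then -δ else 0) := by
    intro k
    induction k with
    | zero => intro _; simpa [ksIter] using hI
    | succ k ih =>
      intro hk
      have := KsInv.step (ksIter_aff h k) (ksIter_cont hc k) (ksIter_real hr k)
        (fun c hc0 => ksIter_stab h (hs c hc0) k) hβ hδ (ih (by omega)) k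
      have e : ((fun i => if k ≤ i ∧ i < N then -δ else 0) + Pi.single k δ : ℕ → ℝ)
          = fun i => if k + 1 ≤ i ∧ i < N then -δ else 0 := by
        funext i
        by_cases hik : i = k
        · subst hik
          have : i < N := by omega
          simp [this]
        · have : (k ≤ i ∧ i < N) ↔ (k + 1 ≤ i ∧ i < N) := by omega
          simp [hik, this]
      rw [e] at this
      exact this
  have := (key N le_rfl 0 (fun _ => le_rfl)).1
  have e : ksR ((fun i => if N ≤ i ∧ i < N then -δ else 0) + 0) = 0 := by
    funext i
    have : ¬ (N ≤ i ∧ i < N) := by omega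
    simp [ksR, this]
  rwa [e] at this

/-! matrices -/

lemma ks_det_affine {d : ℕ} (K : Matrix (Fin d) (Fin d) ℂ) (u v : Fin d → ℂ) (s : ℂ) :
    (K + s • Matrix.vecMulVec u v).det
      = K.det + s * ((K + Matrix.vecMulVec u v).det - K.det) := by
  let M : ℂ → Matrix (Fin d ⊕ Unit) (Fin d ⊕ Unit) ℂ := fun s =>
    Matrix.fromBlocks K (-Matrix.replicateCol Unit u) (s • Matrix.replicateRow Unit v) 1
  have h1 : ∀ s, (M s).det = (K + s • Matrix.vecMulVec u v).det := by
    intro s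
    simp only [M]
    rw [Matrix.det_fromBlocks_one₂₂, Matrix.neg_mul, sub_neg_eq_add, Matrix.mul_smul,
      Matrix.vecMulVec_eq Unit]
  have h2 : ∀ s, M s = (M 0).updateRow (Sum.inr ())
      (s • (Sum.elim v (fun _ => 0)) + Sum.elim (fun _ => 0) (fun _ => 1)) := by
    intro s
    ext a b
    rcases a with a | a <;> rcases b with b | b <;> simp [M, Matrix.updateRow_apply]
  have h3 : ∀ s, (M s).det = s * ((M 0).updateRow (Sum.inr ()) (Sum.elim v (fun _ => 0))).det
      + ((M 0).updateRow (Sum.inr ()) (Sum.elim (fun _ => 0) (fun _ => 1))).det := by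
    intro s
    rw [h2, Matrix.det_updateRow_add, Matrix.det_updateRow_smul]
  have e0 := h1 0
  have e1 := h1 1
  rw [zero_smul, add_zero] at e0
  rw [one_smul] at e1
  rw [← h1, ← e0, ← e1, h3 s, h3 0, h3 1]
  ring

noncomputable def ksM {d : ℕ} (N : ℕ) (w : ℕ → Fin d → ℂ) (x : ℂ) (z : ℕ → ℂ) :
    Matrix (Fin d) (Fin d) ℂ :=
  x • 1 + ∑ i ∈ Finset.range N, z i • Matrix.vecMulVec (w i) (star (w i))

noncomputable def ksPhi {d : ℕ} (N : ℕ) (w : ℕ → Fin d → ℂ) (x : ℂ) (z y : ℕ → ℂ) : ℂ :=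
  (ksM N w x z).det * (ksM N w x y).det

lemma ksM_single_lt {d N : ℕ} (w : ℕ → Fin d → ℂ) (x : ℂ) (z : ℕ → ℂ) {i : ℕ} (hi : i < N)
    (s : ℂ) : ksM N w x (z + Pi.single i s)
      = ksM N w x z + s • Matrix.vecMulVec (w i) (star (w i)) := by
  unfold ksM
  simp only [Pi.add_apply, add_smul, Finset.sum_add_distrib, Pi.single_apply, ite_smul, zero_smul]
  rw [Finset.sum_ite_eq', if_pos (Finset.mem_range.mpr hi), add_assoc]

lemma ksM_single_ge {d N : ℕ} (w : ℕ → Fin d → ℂ) (x : ℂ) (z : ℕ → ℂ) {i : ℕ} (hi : ¬ i < N)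
    (s : ℂ) : ksM N w x (z + Pi.single i s) = ksM N w x z := by
  unfold ksM
  simp only [Pi.add_apply, add_smul, Finset.sum_add_distrib, Pi.single_apply, ite_smul, zero_smul]
  rw [Finset.sum_ite_eq', if_neg (by simpa using hi), add_zero]

lemma ksM_det_aff {d N : ℕ} (w : ℕ → Fin d → ℂ) (x : ℂ) (z : ℕ → ℂ) (i : ℕ) (s : ℂ) :
    (ksM N w x (z + Pi.single i s)).det = (ksM N w x z).det
      + s * ((ksM N w x (z + Pi.single i 1)).det - (ksM N w x z).det) := by
  by_cases hi : i < N
  · rw [ksM_single_lt w x z hi, ksM_single_lt w x z hi, one_smul, ks_det_affine]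
  · rw [ksM_single_ge w x z hi, ksM_single_ge w x z hi]; ring

lemma ksPhi_aff {d N : ℕ} (w : ℕ → Fin d → ℂ) (x : ℂ) : KsAff (ksPhi N w x) := by
  constructor
  · intro z y i s
    simp only [ksPhi]
    rw [ksM_det_aff]; ring
  · intro z y i s
    simp only [ksPhi]
    rw [ksM_det_aff w x y]; ring

lemma ksPhi_cont {d N : ℕ} (w : ℕ → Fin d → ℂ) (x : ℂ) : KsCont (ksPhi N w x) := by
  have h : Continuous fun z => (ksM N w x z).det := by
    apply Continuous.matrix_det
    unfold ksM
    fun_prop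
  unfold KsCont ksPhi
  exact (h.comp continuous_fst).mul (h.comp continuous_snd)

lemma ksM_form {d N : ℕ} (w : ℕ → Fin d → ℂ) (x : ℂ) (z : ℕ → ℂ) (v : Fin d → ℂ) :
    star v ⬝ᵥ (ksM N w x z).mulVec v = x * ((∑ k, Complex.normSq (v k) : ℝ) : ℂ)
      + ∑ i ∈ Finset.range N, z i * ((Complex.normSq (star (w i) ⬝ᵥ v) : ℝ) : ℂ) := by
  unfold ksM
  rw [Matrix.add_mulVec, dotProduct_add, Matrix.smul_mulVec, Matrix.one_mulVec, dotProduct_smul,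
    smul_eq_mul]
  congr 1
  · congr 1
    simp only [dotProduct, Pi.star_apply]
    push_cast
    refine Finset.sum_congr rfl fun k _ => ?_
    rw [mul_comm]; exact Complex.mul_conj _
  · rw [Matrix.sum_mulVec, dotProduct_sum]
    refine Finset.sum_congr rfl fun i _ => ?_
    rw [Matrix.smul_mulVec, dotProduct_smul, smul_eq_mul]
    congr 1
    rw [Matrix.vecMulVec_mulVec, dotProduct_smul]
    rw [← Complex.mul_conj]
    have : (starRingEnd ℂ) (star (w i) ⬝ᵥ v) = star v ⬝ᵥ w i := by
      simp [dotProduct, map_sum, mul_comm]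
    rw [this]
    simp [mul_comm]

lemma ks_normSq_sum_pos {d : ℕ} {v : Fin d → ℂ} (hv : v ≠ 0) :
    0 < ∑ k, Complex.normSq (v k) := by
  obtain ⟨k, hk⟩ := Function.ne_iff.mp hv
  refine Finset.sum_pos' (fun _ _ => Complex.normSq_nonneg _) ⟨k, Finset.mem_univ _, ?_⟩
  exact Complex.normSq_pos.mpr hk

/-- complex `x` in the upper half plane: stability for the closed half plane -/
lemma ksM_det_ne_of_im {d N : ℕ} (w : ℕ → Fin d → ℂ) {x : ℂ} (hx : 0 < x.im) {z : ℕ → ℂ}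
    (hz : ∀ i, 0 ≤ (z i).im) : (ksM N w x z).det ≠ 0 := by
  intro h0
  obtain ⟨v, hv, hv0⟩ := Matrix.exists_mulVec_eq_zero_iff.mpr h0
  have hf := ksM_form (N := N) w x z v
  rw [hv0, dotProduct_zero] at hf
  have him := congrArg Complex.im hf
  rw [Complex.zero_im, Complex.add_im, Complex.im_mul_ofReal, Complex.im_sum] at him
  have h1 := mul_pos hx (ks_normSq_sum_pos hv)
  have h2 : 0 ≤ ∑ i ∈ Finset.range N,
      (z i * ((Complex.normSq (star (w i) ⬝ᵥ v) : ℝ) : ℂ)).im := by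
    refine Finset.sum_nonneg fun i _ => ?_
    rw [Complex.im_mul_ofReal]
    exact mul_nonneg (hz i) (Complex.normSq_nonneg _)
  linarith

lemma ksM_det_ne_of_pos {d N : ℕ} (w : ℕ → Fin d → ℂ) {x : ℝ} (hx : 0 < x) {z : ℕ → ℂ}
    {c : ℝ} (hc : 0 < c) (hz : ∀ i, c ≤ (z i).im) : (ksM N w x z).det ≠ 0 := by
  intro h0
  obtain ⟨v, hv, hv0⟩ := Matrix.exists_mulVec_eq_zero_iff.mpr h0
  have hf := ksM_form (N := N) w x z v
  rw [hv0, dotProduct_zero] at hf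
  have him := congrArg Complex.im hf
  rw [Complex.zero_im, Complex.add_im, Complex.im_mul_ofReal, Complex.im_sum,
    Complex.ofReal_im, zero_mul, zero_add] at him
  have h2 : ∀ i ∈ Finset.range N,
      0 ≤ (z i * ((Complex.normSq (star (w i) ⬝ᵥ v) : ℝ) : ℂ)).im := by
    intro i _
    rw [Complex.im_mul_ofReal]
    exact mul_nonneg (hc.le.trans (hz i)) (Complex.normSq_nonneg _)
  have h3 := (Finset.sum_eq_zero_iff_of_nonneg h2).mp him.symm
  have h4 : ∑ i ∈ Finset.range N, z i * ((Complex.normSq (star (w i) ⬝ᵥ v) : ℝ) : ℂ) = 0 := by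
    refine Finset.sum_eq_zero fun i hi => ?_
    have := h3 i hi
    rw [Complex.im_mul_ofReal] at this
    rcases mul_eq_zero.mp this with h | h
    · have := hz i; linarith
    · rw [h]; simp
  rw [h4, add_zero] at hf
  have h5 := mul_pos hx (ks_normSq_sum_pos hv)
  have : x * ∑ k, Complex.normSq (v k) = 0 := by exact_mod_cast hf.symm
  linarith

lemma ksPhi_stab0 {d N : ℕ} (w : ℕ → Fin d → ℂ) {x : ℂ} (hx : 0 < x.im) :
    KsStab 0 (ksPhi N w x) := by
  intro z y hz hy
  exact mul_ne_zero (ksM_det_ne_of_im w hx hz) (ksM_det_ne_of_im w hx hy)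

lemma ksPhi_stab {d N : ℕ} (w : ℕ → Fin d → ℂ) {x : ℝ} (hx : 0 < x) (c : ℝ) (hc : 0 < c) :
    KsStab c (ksPhi N w x) := by
  intro z y hz hy
  exact mul_ne_zero (ksM_det_ne_of_pos w hx hc hz) (ksM_det_ne_of_pos w hx hc hy)

lemma ksM_herm {d N : ℕ} (w : ℕ → Fin d → ℂ) (x : ℝ) (z : ℕ → ℝ) :
    (ksM N w x (ksR z)).IsHermitian := by
  unfold ksM
  rw [Matrix.IsHermitian, Matrix.conjTranspose_add, Matrix.conjTranspose_smul,
    Matrix.conjTranspose_one, Matrix.conjTranspose_sum]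
  congr 1
  · congr 1; simp
  · refine Finset.sum_congr rfl fun i _ => ?_
    rw [Matrix.conjTranspose_smul, Matrix.conjTranspose_vecMulVec]
    simp [ksR]

lemma ks_hermpoly {d : ℕ} (A : Matrix (Fin d) (Fin d) ℂ) (hA : A.IsHermitian) :
    ∃ p : Polynomial ℝ, p.Monic ∧ p.natDegree = d ∧
      ∀ x : ℂ, Polynomial.aeval x p = (x • 1 - A).det := by
  refine ⟨∏ i, (Polynomial.X - Polynomial.C (hA.eigenvalues i)), ?_, ?_, ?_⟩
  · exact Polynomial.monic_prod_of_monic _ _ fun i _ => Polynomial.monic_X_sub_C _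
  · rw [Polynomial.natDegree_prod_of_monic _ _ fun i _ => Polynomial.monic_X_sub_C _]
    simp
  · intro x
    have h1 := Matrix.eval_charpoly A x
    rw [hA.charpoly_eq, Polynomial.eval_prod] at h1
    have h2 : Matrix.scalar (Fin d) x = x • (1 : Matrix (Fin d) (Fin d) ℂ) := by
      rw [Matrix.smul_one_eq_diagonal]; rfl
    rw [h2] at h1
    rw [← h1, map_prod]
    simp

lemma ksPhi_poly {d N : ℕ} (w : ℕ → Fin d → ℂ) (z y : ℕ → ℝ) :
    ∃ p : Polynomial ℝ, p.Monic ∧ p.natDegree = d + d ∧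
      ∀ x : ℂ, Polynomial.aeval x p = ksPhi N w x (ksR z) (ksR y) := by
  have h : ∀ z : ℕ → ℝ, ∃ p : Polynomial ℝ, p.Monic ∧ p.natDegree = d ∧
      ∀ x : ℂ, Polynomial.aeval x p = (ksM N w x (ksR z)).det := by
    intro z
    obtain ⟨p, h1, h2, h3⟩ := ks_hermpoly (-(ksM N w ((0:ℝ):ℂ) (ksR z))) (ksM_herm w 0 z).neg
    refine ⟨p, h1, h2, fun x => ?_⟩
    rw [h3]
    simp [ksM]
  obtain ⟨p, p1, p2, p3⟩ := h z
  obtain ⟨q, q1, q2, q3⟩ := h y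
  refine ⟨p * q, p1.mul q1, ?_, fun x => ?_⟩
  · rw [p1.natDegree_mul q1, p2, q2]
  · rw [map_mul, p3, q3]; rfl

lemma ksPhi_real {d N : ℕ} (w : ℕ → Fin d → ℂ) (x : ℝ) : KsReal (ksPhi N w x) := by
  intro z y
  obtain ⟨p, -, -, h⟩ := ksPhi_poly (N := N) w z y
  rw [← h]
  rw [show ((x : ℂ)) = algebraMap ℝ ℂ x from rfl,
    Polynomial.aeval_algebraMap_apply_eq_algebraMap_eval]
  exact Complex.ofReal_im _

lemma ks_R_shift (z : ℕ → ℝ) (j : ℕ) : ksR z + Pi.single j (-2) = ksR (z + Pi.single j (-2)) := by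
  rw [ksR_add, ksR_single]; simp

lemma ksIter_poly {φ : ℂ → (ℕ → ℂ) → (ℕ → ℂ) → ℂ} {n : ℕ}
    (hp : ∀ z y : ℕ → ℝ, ∃ p : Polynomial ℝ, p.Monic ∧ p.natDegree = n ∧
      ∀ x : ℂ, Polynomial.aeval x p = φ x (ksR z) (ksR y)) (k : ℕ) :
    ∀ z y : ℕ → ℝ, ∃ p : Polynomial ℝ, p.Monic ∧ p.natDegree = n ∧
      ∀ x : ℂ, Polynomial.aeval x p = ksIter (φ x) k (ksR z) (ksR y) := by
  induction k with
  | zero => exact hp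
  | succ k ih =>
    intro z y
    obtain ⟨p, p1, p2, p3⟩ := ih (z + Pi.single k (-2)) y
    obtain ⟨q, q1, q2, q3⟩ := ih z (y + Pi.single k (-2))
    have hcoef : (Polynomial.C (1/2 : ℝ) * p + Polynomial.C (1/2 : ℝ) * q).coeff n = 1 := by
      rw [Polynomial.coeff_add, Polynomial.coeff_C_mul, Polynomial.coeff_C_mul]
      have h1 : p.coeff n = 1 := by rw [← p2]; exact p1
      have h2 : q.coeff n = 1 := by rw [← q2]; exact q1
      rw [h1, h2]; norm_num
    have hle : (Polynomial.C (1/2 : ℝ) * p + Polynomial.C (1/2 : ℝ) * q).natDegree ≤ n := by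
      refine (Polynomial.natDegree_add_le _ _).trans (max_le ?_ ?_)
      · exact (Polynomial.natDegree_C_mul_le _ _).trans p2.le
      · exact (Polynomial.natDegree_C_mul_le _ _).trans q2.le
    have hdeg := le_antisymm hle
      (Polynomial.le_natDegree_of_ne_zero (by rw [hcoef]; exact one_ne_zero))
    refine ⟨Polynomial.C (1/2 : ℝ) * p + Polynomial.C (1/2 : ℝ) * q, ?_, hdeg, ?_⟩
    · rw [Polynomial.Monic, Polynomial.leadingCoeff, hdeg, hcoef]
    · intro x
      simp only [ksIter, ksT]
      rw [ks_R_shift, ks_R_shift, ← p3, ← q3]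
      simp only [map_add, map_mul, Polynomial.aeval_C]
      simp
      left
      norm_num

lemma ks_choose {φ : ℂ → (ℕ → ℂ) → (ℕ → ℂ) → ℂ} {n : ℕ}
    (hp : ∀ z y : ℕ → ℝ, ∃ p : Polynomial ℝ, p.Monic ∧ p.natDegree = n ∧
      ∀ x : ℂ, Polynomial.aeval x p = φ x (ksR z) (ksR y))
    (ha : ∀ x, KsAff (φ x)) (hs : ∀ x : ℂ, 0 < x.im → KsStab 0 (φ x)) (x0 : ℝ) (k : ℕ) :
    ∀ z y : ℕ → ℝ, (∀ x : ℝ, x0 ≤ x → 0 < (ksIter (φ x) k (ksR z) (ksR y)).re) →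
      ∃ f : ℕ → Bool, ∀ x : ℝ, x0 ≤ x →
        0 < (φ x (ksR (z + fun i => if i < k ∧ f i = true then -2 else 0))
          (ksR (y + fun i => if i < k ∧ f i = false then -2 else 0))).re := by
  induction k with
  | zero =>
    intro z y h
    refine ⟨fun _ => true, fun x hx => ?_⟩
    have := h x hx
    have e0 : (fun i : ℕ => (0:ℝ)) = 0 := rfl
    simpa [ksIter, e0] using this
  | succ k ih =>
    intro z y h
    obtain ⟨p, p1, p2, p3⟩ := ksIter_poly hp k (z + Pi.single k (-2)) y
    obtain ⟨q, q1, q2, q3⟩ := ksIter_poly hp k z (y + Pi.single k (-2))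
    have ev : ∀ (p : Polynomial ℝ) (x : ℝ), (Polynomial.aeval (x : ℂ) p).re = p.eval x := by
      intro p x
      rw [show ((x : ℂ)) = algebraMap ℝ ℂ x from rfl,
        Polynomial.aeval_algebraMap_apply_eq_algebraMap_eval]
      exact Complex.ofReal_re _
    have hsel := ks_select x0 n p q p1 q1 p2 q2 (by
      intro t t0 t1 x hx
      rw [p3, q3, ← ks_R_shift, ← ks_R_shift]
      exact KsStab.T (ksIter_aff (ha x) k) (ksIter_stab (ha x) (hs x hx) k) t0 t1 k
        (ksR z) (ksR y) (fun i => by simp [ksR]) (fun i => by simp [ksR])) (by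
      intro x hx
      have := h x hx
      simp only [ksIter, ksT] at this
      rw [ks_R_shift, ks_R_shift, ← p3, ← q3, Complex.add_re] at this
      have e1 : ((1 : ℂ) - ((1/2 : ℝ) : ℂ)) = ((1 - 1/2 : ℝ) : ℂ) := by push_cast; ring
      rw [e1, Complex.re_ofReal_mul, Complex.re_ofReal_mul, ev, ev] at this
      exact this)
    rcases hsel with hsel | hsel
    · obtain ⟨f, hf⟩ := ih (z + Pi.single k (-2)) y (fun x hx => by
        rw [← p3, ev]; exact hsel x hx)
      refine ⟨Function.update f k true, fun x hx => ?_⟩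
      have := hf x hx
      have e1 : (z + Pi.single k (-2) + fun i => if i < k ∧ f i = true then -2 else 0 : ℕ → ℝ)
          = z + fun i => if i < k + 1 ∧ Function.update f k true i = true then -2 else 0 := by
        funext i
        by_cases hik : i = k
        · subst hik; simp
        · have : i ≤ k ↔ i < k := by omega
          simp [hik, this]
      have e2 : (y + fun i => if i < k ∧ f i = false then -2 else 0 : ℕ → ℝ)
          = y + fun i => if i < k + 1 ∧ Function.update f k true i = false then -2 else 0 := by
        funext i
        by_cases hik : i = k
        · subst hik; simp
        · have : i ≤ k ↔ i < k := by omega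
          simp [hik, this]
      rw [e1, e2] at this
      exact this
    · obtain ⟨f, hf⟩ := ih z (y + Pi.single k (-2)) (fun x hx => by
        rw [← q3, ev]; exact hsel x hx)
      refine ⟨Function.update f k false, fun x hx => ?_⟩
      have := hf x hx
      have e1 : (y + Pi.single k (-2) + fun i => if i < k ∧ f i = false then -2 else 0 : ℕ → ℝ)
          = y + fun i => if i < k + 1 ∧ Function.update f k false i = false then -2 else 0 := by
        funext i
        by_cases hik : i = k
        · subst hik; simp
        · have : i ≤ k ↔ i < k := by omega
          simp [hik, this]
      have e2 : (z + fun i => if i < k ∧ f i = true then -2 else 0 : ℕ → ℝ)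
          = z + fun i => if i < k + 1 ∧ Function.update f k false i = true then -2 else 0 := by
        funext i
        by_cases hik : i = k
        · subst hik; simp
        · have : i ≤ k ↔ i < k := by omega
          simp [hik, this]
      rw [e1, e2] at this
      exact this

lemma ks_cs {d : ℕ} (w u : Fin d → ℂ) : Complex.normSq (star w ⬝ᵥ u)
    ≤ (∑ k, Complex.normSq (w k)) * ∑ k, Complex.normSq (u k) := by
  have h1 : ‖star w ⬝ᵥ u‖ ≤ ∑ k, ‖w k‖ * ‖u k‖ := by
    refine (norm_sum_le _ _).trans (le_of_eq ?_)
    refine Finset.sum_congr rfl fun k _ => ?_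
    simp
  have h2 := Finset.sum_mul_sq_le_sq_mul_sq Finset.univ (fun k => ‖w k‖) (fun k => ‖u k‖)
  simp only [Complex.normSq_eq_norm_sq]
  exact (pow_le_pow_left₀ (norm_nonneg _) h1 2).trans h2

open scoped ComplexOrder in
lemma ks_rankone_det {d : ℕ} (K : Matrix (Fin d) (Fin d) ℂ) (hK : K.IsHermitian) {t e : ℝ}
    (ht : 0 < t) (he : 0 ≤ e)
    (hf : ∀ v : Fin d → ℂ, t * ∑ k, Complex.normSq (v k) ≤ (star v ⬝ᵥ K.mulVec v).re)
    (w : Fin d → ℂ) (hw : ∑ k, Complex.normSq (w k) ≤ e) :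
    0 < K.det.re ∧ K.det.im = 0 ∧
      ((K + Matrix.vecMulVec w (star w)).det).re ≤ (1 + e / t) * K.det.re := by
  have hpd : K.PosDef := by
    refine Matrix.PosDef.of_dotProduct_mulVec_pos hK fun v hv => ?_
    have h1 := hf v
    have h2 := mul_pos ht (ks_normSq_sum_pos hv)
    rw [Complex.pos_iff]
    refine ⟨by linarith, ?_⟩
    have := hK.im_star_dotProduct_mulVec_self v
    exact this.symm
  have hd := Complex.pos_iff.mp hpd.det_pos
  have hunit : IsUnit K.det := isUnit_iff_ne_zero.mpr hpd.det_pos.ne'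
  refine ⟨hd.1, hd.2.symm, ?_⟩
  set u := K⁻¹.mulVec w with hu
  have hKu : K.mulVec u = w := by
    rw [hu, Matrix.mulVec_mulVec, Matrix.mul_nonsing_inv _ hunit, Matrix.one_mulVec]
  have hfac : K + Matrix.vecMulVec w (star w)
      = K * (1 + Matrix.replicateCol Unit u * Matrix.replicateRow Unit (star w)) := by
    rw [← Matrix.vecMulVec_eq Unit, Matrix.mul_add, Matrix.mul_one, Matrix.mul_vecMulVec, hKu]
  have hdet : (K + Matrix.vecMulVec w (star w)).det = K.det * (1 + star w ⬝ᵥ u) := by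
    rw [hfac, Matrix.det_mul, Matrix.det_one_add_replicateCol_mul_replicateRow]
  set r := star w ⬝ᵥ u with hr
  have hconj : star u ⬝ᵥ w = (starRingEnd ℂ) r := by
    rw [hr]; simp [dotProduct, map_sum, mul_comm]
  have h1 := hf u
  rw [hKu, hconj, Complex.conj_re] at h1
  have h2 := ks_cs w u
  rw [← hr, Complex.normSq_apply] at h2
  have hU : 0 ≤ ∑ k, Complex.normSq (u k) := Finset.sum_nonneg fun _ _ => Complex.normSq_nonneg _
  have h3 : r.re * r.re ≤ e * ∑ k, Complex.normSq (u k) := by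
    have := mul_le_mul_of_nonneg_right hw hU
    nlinarith [mul_self_nonneg r.im]
  have h4 : r.re ≤ e / t := by
    rw [le_div_iff₀ ht]
    by_contra hcon
    push Not at hcon
    have hr0 : 0 < r.re := by
      by_contra h0
      push Not at h0
      nlinarith
    have : t * (r.re * r.re) ≤ e * r.re := by
      calc t * (r.re * r.re) ≤ t * (e * ∑ k, Complex.normSq (u k)) :=
            mul_le_mul_of_nonneg_left h3 ht.le
        _ = e * (t * ∑ k, Complex.normSq (u k)) := by ring
        _ ≤ e * r.re := mul_le_mul_of_nonneg_left h1 he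
    nlinarith
  rw [hdet, Complex.mul_re, ← hd.2, zero_mul, sub_zero, Complex.add_re, Complex.one_re, mul_comm]
  exact mul_le_mul_of_nonneg_right (by linarith) hd.1.le

lemma ksM_low {d N : ℕ} (w : ℕ → Fin d → ℂ)
    (hB : ∀ v : Fin d → ℂ, ∑ i ∈ Finset.range N, Complex.normSq (star (w i) ⬝ᵥ v)
      ≤ ∑ k, Complex.normSq (v k)) {x δ : ℝ} (hδ : 0 ≤ δ) (z : ℕ → ℝ)
    (hz : ∀ i < N, -δ ≤ z i) (v : Fin d → ℂ) :
    (x - δ) * ∑ k, Complex.normSq (v k) ≤ (star v ⬝ᵥ (ksM N w x (ksR z)).mulVec v).re := by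
  rw [ksM_form, Complex.add_re, Complex.re_sum]
  have h1 : ∀ i ∈ Finset.range N, -δ * Complex.normSq (star (w i) ⬝ᵥ v)
      ≤ (ksR z i * ((Complex.normSq (star (w i) ⬝ᵥ v) : ℝ) : ℂ)).re := by
    intro i hi
    rw [Complex.re_mul_ofReal]
    simp only [ksR, Complex.ofReal_re]
    exact mul_le_mul_of_nonneg_right (hz i (Finset.mem_range.mp hi)) (Complex.normSq_nonneg _)
  have h2 := Finset.sum_le_sum h1
  rw [← Finset.mul_sum] at h2
  have h3 := mul_le_mul_of_nonneg_left (hB v) hδ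
  rw [Complex.re_mul_ofReal, Complex.ofReal_re]
  linarith

lemma ks_start_inv {d N : ℕ} (w : ℕ → Fin d → ℂ) {ε : ℝ} (hε : 0 ≤ ε)
    (hB : ∀ v : Fin d → ℂ, ∑ i ∈ Finset.range N, Complex.normSq (star (w i) ⬝ᵥ v)
      ≤ ∑ k, Complex.normSq (v k)) (hw : ∀ i, ∑ k, Complex.normSq (w i k) ≤ ε)
    {x δ β : ℝ} (hδ : 0 ≤ δ) (hx : δ < x) (hβ : 2 * ε / (x - δ) ≤ β) :
    KsInv (ksPhi N w x) β (fun i => if i < N then -δ else 0) := by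
  intro t ht
  set z : ℕ → ℝ := (fun i => if i < N then -δ else 0) + t with hzdef
  have hz : ∀ i < N, -δ ≤ z i := by
    intro i hi
    simp only [hzdef, Pi.add_apply, if_pos hi]
    have := ht i
    linarith
  have hx' : 0 < x - δ := by linarith
  have key := fun j => ks_rankone_det (ksM N w x (ksR z)) (ksM_herm w x z) hx' hε
    (ksM_low w hB hδ z hz) (w j) (hw j)
  have hP := (key 0).1
  have hPi := (key 0).2.1
  have hpos : 0 < (ksPhi N w x (ksR z) (ksR z)).re := by
    simp only [ksPhi, Complex.mul_re, hPi, mul_zero, sub_zero]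
    exact mul_pos hP hP
  have hβ0 : 0 ≤ β := le_trans (by positivity) hβ
  refine ⟨hpos, fun j => ?_⟩
  by_cases hj : j < N
  · have h3 := (key j).2.2
    simp only [ksD, ksPhi]
    rw [ksM_single_lt w x _ hj, one_smul]
    simp only [Complex.mul_re, Complex.add_re, Complex.sub_re, hPi, mul_zero, sub_zero, zero_mul,
      Complex.re_ofNat, Complex.im_ofNat]
    set P := (ksM N w x (ksR z)).det.re
    set Q := (ksM N w x (ksR z) + Matrix.vecMulVec (w j) (star (w j))).det.re
    have h4 : 2 * P * (Q - P) ≤ 2 * P * ((ε / (x - δ)) * P) :=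
      mul_le_mul_of_nonneg_left (by linarith) (by positivity)
    have h5 : 2 * ε / (x - δ) * (P * P) ≤ β * (P * P) :=
      mul_le_mul_of_nonneg_right hβ (by positivity)
    have h6 : 2 * ε / (x - δ) * (P * P) = 2 * P * ((ε / (x - δ)) * P) := by ring
    linarith
  · have e : ksD j (ksPhi N w x) (ksR z) (ksR z) = 0 := by
      simp only [ksD, ksPhi]
      rw [ksM_single_ge w x _ hj]; ring
    rw [e, Complex.zero_re]
    exact mul_nonneg hβ0 hpos.le

lemma ks_finite_mat {d N : ℕ} (w : ℕ → Fin d → ℂ) {ε : ℝ} (hε : 0 < ε)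
    (hB : ∀ v : Fin d → ℂ, ∑ i ∈ Finset.range N, Complex.normSq (star (w i) ⬝ᵥ v)
      ≤ ∑ k, Complex.normSq (v k)) (hw : ∀ i, ∑ k, Complex.normSq (w i k) ≤ ε) :
    ∃ f : ℕ → Bool, ∀ b, ∀ x : ℝ, (1 + √(2 * ε)) ^ 2 ≤ x →
      (ksM N w x (ksR (fun i => if i < N ∧ f i = b then -2 else 0))).det ≠ 0 := by
  have hs : 0 < √(2 * ε) := Real.sqrt_pos.mpr (by linarith)
  have hss : √(2 * ε) * √(2 * ε) = 2 * ε := Real.mul_self_sqrt (by linarith)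
  set s := √(2 * ε)
  have h := ks_choose (φ := fun x => ksPhi N w x) (ksPhi_poly w) (ksPhi_aff w)
    (fun x hx => ksPhi_stab0 w hx) ((1 + s) ^ 2) N 0 0 (by
      intro x hx
      have hx1 : s + s * s ≤ x - (1 + s) := by nlinarith
      have hr0 : ksR 0 = 0 := by funext i; simp [ksR]
      rw [hr0]
      have hpos : 0 < s + s * s := by positivity
      refine ks_barrier (β := s / (1 + s)) (δ := 1 + s) (ksPhi_aff w x) (ksPhi_cont w x)
        (ksPhi_real w x) (ksPhi_stab w (by nlinarith)) ?_ (by linarith) N ?_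
      · rw [div_mul_cancel₀ _ (by positivity)]; linarith
      · refine ks_start_inv w hε.le hB hw (by positivity) (by linarith) ?_
        rw [← hss, div_le_div_iff₀ (by linarith) (by positivity)]
        nlinarith)
  obtain ⟨f, hf⟩ := h
  refine ⟨f, fun b x hx h0 => ?_⟩
  have := hf x hx
  rw [zero_add, zero_add] at this
  simp only [ksPhi] at this
  cases b
  · rw [h0, mul_zero] at this; simp at this
  · rw [h0, zero_mul] at this; simp at this

open scoped ComplexOrder in
lemma ks_finite_vec {d N : ℕ} (w : ℕ → Fin d → ℂ) {ε : ℝ} (hε : 0 < ε)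
    (hB : ∀ v : Fin d → ℂ, ∑ i ∈ Finset.range N, Complex.normSq (star (w i) ⬝ᵥ v)
      ≤ ∑ k, Complex.normSq (v k)) (hw : ∀ i, ∑ k, Complex.normSq (w i k) ≤ ε) :
    ∃ f : ℕ → Bool, ∀ b, ∀ v : Fin d → ℂ,
      ∑ i ∈ Finset.range N, (if f i = b then Complex.normSq (star (w i) ⬝ᵥ v) else 0)
        ≤ (1 / 2 + √(2 * ε) + ε) * ∑ k, Complex.normSq (v k) := by
  obtain ⟨f, hf⟩ := ks_finite_mat w hε hB hw
  refine ⟨f, fun b v => ?_⟩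
  have hss : √(2 * ε) * √(2 * ε) = 2 * ε := Real.mul_self_sqrt (by linarith)
  set x0 := (1 + √(2 * ε)) ^ 2 with hx0
  set z : ℕ → ℝ := fun i => if i < N ∧ f i = b then -2 else 0 with hz
  have hH := ksM_herm (N := N) w x0 z
  have hpsd : (ksM N w x0 (ksR z)).PosSemidef := by
    rw [hH.posSemidef_iff_eigenvalues_nonneg]
    intro j
    by_contra hneg
    have hneg : hH.eigenvalues j < 0 := not_le.mp hneg
    refine hf b (x0 - hH.eigenvalues j) (by linarith) ?_
    rw [← Matrix.exists_mulVec_eq_zero_iff]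
    refine ⟨(hH.eigenvectorBasis j).ofLp, ?_, ?_⟩
    · intro h
      have := hH.eigenvectorBasis.orthonormal.ne_zero j
      apply this
      ext k
      exact congrFun h k
    · have h1 := hH.mulVec_eigenvectorBasis j
      have h2 : ksM N w ((x0 - hH.eigenvalues j : ℝ) : ℂ) (ksR z)
          = ksM N w x0 (ksR z) - ((hH.eigenvalues j : ℝ) : ℂ) • 1 := by
        simp only [ksM]; push_cast; rw [sub_smul]; abel
      rw [h2, Matrix.sub_mulVec, Matrix.smul_mulVec, Matrix.one_mulVec, h1]
      ext k; simp
  have h1 := hpsd.re_dotProduct_nonneg v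
  have h2 : 0 ≤ (star v ⬝ᵥ (ksM N w x0 (ksR z)).mulVec v).re := h1
  rw [ksM_form, Complex.add_re, Complex.re_sum, Complex.re_mul_ofReal, Complex.ofReal_re] at h2
  have h3 : ∑ i ∈ Finset.range N, (ksR z i * ((Complex.normSq (star (w i) ⬝ᵥ v) : ℝ) : ℂ)).re
      = -2 * ∑ i ∈ Finset.range N, (if f i = b then Complex.normSq (star (w i) ⬝ᵥ v) else 0) := by
    rw [Finset.mul_sum]
    refine Finset.sum_congr rfl fun i hi => ?_
    have hi := Finset.mem_range.mp hi
    rw [Complex.re_mul_ofReal]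
    by_cases hfi : f i = b
    · simp [ksR, hz, hi, hfi]
    · simp [ksR, hz, hfi]
  rw [h3] at h2
  have h4 : x0 = 2 * (1 / 2 + √(2 * ε) + ε) := by rw [hx0]; nlinarith
  rw [h4] at h2
  linarith

lemma ks_rankOne_apply {H : Type*} [NormedAddCommGroup H] [InnerProductSpace ℂ H]
    (u v : H) : rankOne u v = inner ℂ u v • u := rfl

lemma ks_bessel {H : Type*} [NormedAddCommGroup H] [InnerProductSpace ℂ H] (u : ℕ → H)
    (hsum : ∀ v : H,
      Tendsto (fun n => ∑ i ∈ Finset.range n, rankOne (u i) v) atTop (nhds v)) (n : ℕ) (v : H) :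
    ∑ i ∈ Finset.range n, ‖inner ℂ (u i) v‖ ^ 2 ≤ ‖v‖ ^ 2 := by
  have h1 : Tendsto (fun n => (inner ℂ v (∑ i ∈ Finset.range n, rankOne (u i) v) : ℂ).re) atTop
      (nhds ((inner ℂ v v : ℂ).re)) :=
    (Complex.continuous_re.tendsto _).comp (tendsto_const_nhds.inner (hsum v))
  have h2 : ∀ n, (inner ℂ v (∑ i ∈ Finset.range n, rankOne (u i) v) : ℂ).re
      = ∑ i ∈ Finset.range n, ‖inner ℂ (u i) v‖ ^ 2 := by
    intro n
    rw [inner_sum, Complex.re_sum]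
    refine Finset.sum_congr rfl fun i _ => ?_
    rw [ks_rankOne_apply, inner_smul_right, ← inner_conj_symm v (u i), Complex.mul_conj,
      Complex.ofReal_re, Complex.normSq_eq_norm_sq]
  simp only [h2] at h1
  have h3 : (inner ℂ v v : ℂ).re = ‖v‖ ^ 2 := by
    rw [inner_self_eq_norm_sq_to_K]; norm_cast
  rw [h3] at h1
  refine Monotone.ge_of_tendsto ?_ h1 n
  intro a b hab
  exact Finset.sum_le_sum_of_subset_of_nonneg (Finset.range_mono hab) fun _ _ _ => by positivity

lemma ks_synth {H : Type*} [NormedAddCommGroup H] [InnerProductSpace ℂ H] (g : ℕ → H) {c : ℝ}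
    (hc : 0 ≤ c) (hg : ∀ n v, ∑ i ∈ Finset.range n, ‖inner ℂ (g i) v‖ ^ 2 ≤ c * ‖v‖ ^ 2)
    (F : Finset ℕ) (a : ℕ → ℂ) : ‖∑ i ∈ F, a i • g i‖ ^ 2 ≤ c * ∑ i ∈ F, ‖a i‖ ^ 2 := by
  set y := ∑ i ∈ F, a i • g i with hy
  have hF : ∑ i ∈ F, ‖inner ℂ (g i) y‖ ^ 2 ≤ c * ‖y‖ ^ 2 := by
    refine le_trans ?_ (hg (F.sup id + 1) y)
    refine Finset.sum_le_sum_of_subset_of_nonneg ?_ fun _ _ _ => by positivity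
    intro i hi
    rw [Finset.mem_range]
    exact Nat.lt_succ_of_le (Finset.le_sup (f := id) hi)
  have h1 : ‖y‖ ^ 2 ≤ ∑ i ∈ F, ‖a i‖ * ‖inner ℂ (g i) y‖ := by
    have e : (inner ℂ y y : ℂ) = ∑ i ∈ F, (starRingEnd ℂ) (a i) * inner ℂ (g i) y := by
      conv_lhs => rw [hy, sum_inner]
      refine Finset.sum_congr rfl fun i _ => ?_
      rw [inner_smul_left, ← hy]
    have e2 : ‖(inner ℂ y y : ℂ)‖ = ‖y‖ ^ 2 := by
      rw [inner_self_eq_norm_sq_to_K]; simp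
    rw [← e2, e]
    refine (norm_sum_le _ _).trans (le_of_eq (Finset.sum_congr rfl fun i _ => ?_))
    simp
  have h2 := Finset.sum_mul_sq_le_sq_mul_sq F (fun i => ‖a i‖) (fun i => ‖inner ℂ (g i) y‖)
  have hA : 0 ≤ ∑ i ∈ F, ‖a i‖ ^ 2 := Finset.sum_nonneg fun _ _ => by positivity
  have h3 : (‖y‖ ^ 2) ^ 2 ≤ (∑ i ∈ F, ‖a i‖ ^ 2) * (c * ‖y‖ ^ 2) :=
    ((pow_le_pow_left₀ (by positivity) h1 2).trans h2).trans (mul_le_mul_of_nonneg_left hF hA)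
  by_contra hcon
  have hcon := not_le.mp hcon
  have h4 : 0 < ‖y‖ ^ 2 := lt_of_le_of_lt (by positivity) hcon
  nlinarith

lemma ks_makeT {H : Type*} [NormedAddCommGroup H] [InnerProductSpace ℂ H] [CompleteSpace H]
    (g : ℕ → H) {c : ℝ}
    (hc : 0 ≤ c) (hg : ∀ n v, ∑ i ∈ Finset.range n, ‖inner ℂ (g i) v‖ ^ 2 ≤ c * ‖v‖ ^ 2) :
    ∃ T : H →L[ℂ] H, (∀ v, Tendsto (fun n => ∑ i ∈ Finset.range n, rankOne (g i) v) atTop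
      (nhds (T v))) ∧ ‖T‖ ≤ c := by
  have hs : ∀ v, Summable fun i => rankOne (g i) v := by
    intro v
    have hsq : Summable fun i => ‖inner ℂ (g i) v‖ ^ 2 :=
      summable_of_sum_range_le (fun _ => by positivity) (fun n => hg n v)
    rw [summable_iff_vanishing_norm] at hsq ⊢
    intro e he
    obtain ⟨s, hs⟩ := hsq (e ^ 2 / (c + 1)) (by positivity)
    refine ⟨s, fun t ht => ?_⟩
    have h1 := hs t ht
    have hnn : 0 ≤ ∑ i ∈ t, ‖inner ℂ (g i) v‖ ^ 2 := Finset.sum_nonneg fun _ _ => by positivity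
    rw [Real.norm_of_nonneg hnn, lt_div_iff₀ (by positivity)] at h1
    have h2 := ks_synth g hc hg t (fun i => inner ℂ (g i) v)
    have h3 : ‖∑ i ∈ t, inner ℂ (g i) v • g i‖ ^ 2 < e ^ 2 := by nlinarith
    exact lt_of_pow_lt_pow_left₀ 2 he.le h3
  have ht : ∀ v, Tendsto (fun n => ∑ i ∈ Finset.range n, rankOne (g i) v) atTop
      (nhds (∑' i, rankOne (g i) v)) := fun v => (hs v).hasSum.tendsto_sum_nat
  have hlim : Tendsto (fun n (v : H) => (∑ i ∈ Finset.range n, rankOne (g i) : H →L[ℂ] H) v) atTop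
      (nhds fun v => ∑' i, rankOne (g i) v) := by
    rw [tendsto_pi_nhds]
    intro v
    simpa [sum_apply] using ht v
  refine ⟨continuousLinearMapOfTendsto _ hlim, fun v => ht v, ?_⟩
  refine ContinuousLinearMap.opNorm_le_bound _ hc fun v => ?_
  refine le_of_tendsto (ht v).norm (Eventually.of_forall fun n => ?_)
  have h2 := ks_synth g hc hg (Finset.range n) (fun i => inner ℂ (g i) v)
  have h3 := mul_le_mul_of_nonneg_left (hg n v) hc
  refine (pow_le_pow_iff_left₀ (norm_nonneg _) (by positivity) two_ne_zero).mp ?_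
  refine (h2.trans h3).trans (le_of_eq (by ring))

lemma ks_compact (P : ℕ → (ℕ → Bool) → Prop) (hanti : ∀ n f, P (n + 1) f → P n f)
    (hloc : ∀ n f f', (∀ i < n, f i = f' i) → P n f → P n f') (hne : ∀ n, ∃ f, P n f) :
    ∃ f, ∀ n, P n f := by
  have hcl : ∀ n, IsClosed {f | P n f} := by
    intro n
    have : IsOpen {f | P n f}ᶜ := by
      rw [isOpen_iff_forall_mem_open]
      intro f hf
      refine ⟨Set.pi (Finset.range n : Set ℕ) (fun i => {f i}), ?_, ?_, ?_⟩
      · intro f' hf' hP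
        exact hf (hloc n f' f (fun i hi => by simpa using hf' i (by simpa using hi)) hP)
      · exact isOpen_set_pi (Finset.finite_toSet _) fun i _ => isOpen_discrete _
      · intro i _; rfl
    exact isOpen_compl_iff.mp this
  obtain ⟨f, hf⟩ := IsCompact.nonempty_iInter_of_sequence_nonempty_isCompact_isClosed
    (fun n => {f | P n f}) (fun n f hf => hanti n f hf) (fun n => hne n)
    ((hcl 0).isCompact) hcl
  exact ⟨f, fun n => Set.mem_iInter.mp hf n⟩

lemma ks_finite_hilb {H : Type*} [NormedAddCommGroup H] [InnerProductSpace ℂ H] (u : ℕ → H)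
    {ε : ℝ} (N : ℕ) (hu : ∀ i, ‖u i‖ ^ 2 ≤ ε)
    (hbes : ∀ v, ∑ i ∈ Finset.range N, ‖inner ℂ (u i) v‖ ^ 2 ≤ ‖v‖ ^ 2) :
    ∃ f : ℕ → Bool, ∀ b v, ∑ i ∈ Finset.range N, (if f i = b then ‖inner ℂ (u i) v‖ ^ 2 else 0)
      ≤ (1 / 2 + √(2 * ε) + ε) * ‖v‖ ^ 2 := by
  have hε0 : 0 ≤ ε := le_trans (by positivity) (hu 0)
  rcases hε0.eq_or_lt with hε | hε
  · have hu0 : ∀ i, u i = 0 := by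
      intro i
      have := hu i
      rw [← hε] at this
      have h2 : ‖u i‖ = 0 := by nlinarith [norm_nonneg (u i)]
      exact norm_eq_zero.mp h2
    refine ⟨fun _ => true, fun b v => ?_⟩
    simp only [hu0, inner_zero_left, norm_zero]
    simp
    positivity
  · let V : Submodule ℂ H := Submodule.span ℂ (u '' (Finset.range N : Set ℕ))
    have : FiniteDimensional ℂ V :=
      FiniteDimensional.span_of_finite ℂ ((Finset.finite_toSet _).image _)
    let e := stdOrthonormalBasis ℂ V
    have ho : Orthonormal ℂ (fun k => (e k : H)) := e.orthonormal.comp_linearIsometry V.subtypeₗᵢ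
    let w : ℕ → Fin (Module.finrank ℂ V) → ℂ := fun i k => inner ℂ (e k : H) (u i)
    have hmem : ∀ i < N, u i ∈ V := fun i hi =>
      Submodule.subset_span ⟨i, by simpa using hi, rfl⟩
    have hexp : ∀ i < N, ∑ k, w i k • (e k : H) = u i := by
      intro i hi
      have := e.sum_repr' ⟨u i, hmem i hi⟩
      have h2 := congrArg (fun x : V => (x : H)) this
      simpa [w] using h2
    have hdot : ∀ i (c : Fin (Module.finrank ℂ V) → ℂ),
        star (w i) ⬝ᵥ c = inner ℂ (u i) (∑ k, c k • (e k : H)) := by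
      intro i c
      rw [inner_sum]
      simp only [dotProduct, Pi.star_apply, w]
      refine Finset.sum_congr rfl fun k _ => ?_
      rw [inner_smul_right, ← inner_conj_symm (u i), mul_comm]; rfl
    have hdot2 : ∀ i < N, ∀ v : H,
        star (w i) ⬝ᵥ (fun k => inner ℂ (e k : H) v) = inner ℂ (u i) v := by
      intro i hi v
      conv_rhs => rw [← hexp i hi, sum_inner]
      simp only [dotProduct, Pi.star_apply]
      refine Finset.sum_congr rfl fun k _ => ?_
      rw [inner_smul_left]; rfl
    have hnorm : ∀ c : Fin (Module.finrank ℂ V) → ℂ,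
        ‖∑ k, c k • (e k : H)‖ ^ 2 = ∑ k, Complex.normSq (c k) := by
      intro c
      have h1 := ho.inner_sum c c Finset.univ
      rw [inner_self_eq_norm_sq_to_K] at h1
      have h2 : ∀ k, (starRingEnd ℂ) (c k) * c k = ((Complex.normSq (c k) : ℝ) : ℂ) := by
        intro k; rw [mul_comm, Complex.mul_conj]
      simp only [h2] at h1
      apply Complex.ofReal_injective
      push_cast
      exact h1
    obtain ⟨f, hf⟩ := ks_finite_vec (N := N) w hε (by
        intro c
        rw [← hnorm]
        simp only [hdot, Complex.normSq_eq_norm_sq]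
        exact hbes _) (by
        intro i
        simp only [Complex.normSq_eq_norm_sq, w]
        exact (ho.sum_inner_products_le (u i)).trans (hu i))
    refine ⟨f, fun b v => ?_⟩
    have h1 := hf b (fun k => inner ℂ (e k : H) v)
    have h2 : ∑ k, Complex.normSq (inner ℂ (e k : H) v) ≤ ‖v‖ ^ 2 := by
      simp only [Complex.normSq_eq_norm_sq]
      exact ho.sum_inner_products_le v
    have h3 := mul_le_mul_of_nonneg_left h2
      (show 0 ≤ 1 / 2 + √(2 * ε) + ε by positivity)
    refine le_trans (le_of_eq ?_) (h1.trans h3)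
    refine Finset.sum_congr rfl fun i hi => ?_
    rw [hdot2 i (Finset.mem_range.mp hi) v, Complex.normSq_eq_norm_sq]

/-- **Marcus–Spielman–Srivastava, infinite-dimensional version.** If `(uᵢ)` is a sequence
of vectors in a complex Hilbert space `H` with `∑ᵢ uᵢ ⊗ uᵢ = I` (partial sums converging
in the strong operator topology) and `‖uᵢ‖² ≤ ε` for all `i`, then `ℕ` can be partitioned
into two sets (encoded by a boolean function `f`) on each of which the sum of the rank-one
operators `uᵢ ⊗ uᵢ` exists in the strong operator topology and has operator norm at most
`1/2 + √(2ε) + ε`. -/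
theorem stmt6 {H : Type*} [NormedAddCommGroup H] [InnerProductSpace ℂ H] [CompleteSpace H]
    (ε : ℝ) (u : ℕ → H)
    (hsum : ∀ v : H,
      Tendsto (fun n => ∑ i ∈ Finset.range n, rankOne (u i) v) atTop (nhds v))
    (hnorm : ∀ i, ‖u i‖ ^ 2 ≤ ε) :
    ∃ (f : ℕ → Bool) (T : Bool → H →L[ℂ] H),
      ∀ b : Bool,
        (∀ v : H,
          Tendsto (fun n => ∑ i ∈ (Finset.range n).filter (fun i => f i = b),
            rankOne (u i) v) atTop (nhds (T b v))) ∧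
        ‖T b‖ ≤ 1 / 2 + Real.sqrt (2 * ε) + ε := by
  have hε0 : 0 ≤ ε := le_trans (by positivity) (hnorm 0)
  have hc : 0 ≤ 1 / 2 + √(2 * ε) + ε := by positivity
  obtain ⟨f, hf⟩ := ks_compact (fun n f => ∀ b v,
      ∑ i ∈ Finset.range n, (if f i = b then ‖inner ℂ (u i) v‖ ^ 2 else 0)
        ≤ (1 / 2 + √(2 * ε) + ε) * ‖v‖ ^ 2) (by
      intro n f h b v
      refine le_trans ?_ (h b v)
      rw [Finset.sum_range_succ]
      have : 0 ≤ (if f n = b then ‖inner ℂ (u n) v‖ ^ 2 else 0) := by split_ifs <;> positivity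
      linarith) (by
      intro n f f' hff h b v
      refine le_trans (le_of_eq ?_) (h b v)
      refine Finset.sum_congr rfl fun i hi => ?_
      rw [hff i (Finset.mem_range.mp hi)])
    (fun n => ks_finite_hilb u n hnorm (ks_bessel u hsum n))
  have hT : ∀ b, ∃ T : H →L[ℂ] H, (∀ v, Tendsto (fun n => ∑ i ∈ Finset.range n,
      rankOne (if f i = b then u i else 0) v) atTop (nhds (T v)))
        ∧ ‖T‖ ≤ 1 / 2 + √(2 * ε) + ε := by
    intro b
    refine ks_makeT (fun i => if f i = b then u i else 0) hc fun n v => ?_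
    refine le_trans (le_of_eq ?_) (hf n b v)
    refine Finset.sum_congr rfl fun i _ => ?_
    by_cases h : f i = b <;> simp [h]
  choose T hT1 hT2 using hT
  refine ⟨f, T, fun b => ⟨fun v => ?_, hT2 b⟩⟩
  refine (hT1 b v).congr fun n => ?_
  rw [Finset.sum_filter]
  refine Finset.sum_congr rfl fun i _ => ?_
  by_cases h : f i = b <;> simp [h, ks_rankOne_apply]
end

section
/- Let (u_i)_{i ∈ ℕ} be a sequence of vectors in a complex Hilbert space H such that ‖u_i‖ → 0 and Σ_i u_i ⊗ u_i ≤ I (the partial sums converge strongly to a positive operator bounded above by the identity). Suppose 0 ≤ t_i ≤ 1 for each i. Then there is a set of indices S ⊆ ℕ such that the operator Σ_{i ∈ S} u_i ⊗ u_i − Σ_{i=1}^∞ t_i u_i ⊗ u_i is a compact operator on H. -/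
open Filter

set_option linter.unusedSectionVars false

namespace KS
open Matrix Complex
open scoped ComplexOrder

variable {n : Type*} [Fintype n] [DecidableEq n]

/-- rank one matrix -/
def R (v : n → ℂ) : Matrix n n ℂ := vecMulVec v (star v)

lemma R_psd (v : n → ℂ) : (R v).PosSemidef := posSemidef_vecMulVec_self_star v

/-- `M` is above the roots of `p`. -/
def Above (p : Matrix n n ℂ → ℂ) (M : Matrix n n ℂ) : Prop :=
  ∀ Y : Matrix n n ℂ, Y.PosSemidef → 0 < (p (M + Y)).re

structure Good (p : Matrix n n ℂ → ℂ) : Prop where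
  aff : ∀ M v (z : ℂ), p (M + z • R v) = p M + z * (p M - p (M - R v))
  stab : ∀ X Y : Matrix n n ℂ, X.IsHermitian → Y.PosDef → p (X + I • Y) ≠ 0
  real : ∀ X : Matrix n n ℂ, X.IsHermitian → (p X).im = 0
  big : ∀ X : Matrix n n ℂ, X.IsHermitian → ∃ Z : Matrix n n ℂ, Z.PosSemidef ∧ Above p (X + Z)
  cont : Continuous p

lemma det_aff (M : Matrix n n ℂ) (u w : n → ℂ) : ∃ c : ℂ, ∀ z : ℂ,
    (M + z • vecMulVec u w).det = M.det + z * c := by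
  let B : Matrix (n ⊕ Unit) (n ⊕ Unit) ℂ := fromBlocks M (replicateCol Unit u) 0 1
  refine ⟨(updateRow B (Sum.inr ()) (Sum.elim (-w) 0)).det, fun z => ?_⟩
  have h1 : (M + z • vecMulVec u w).det =
      (fromBlocks M (replicateCol Unit u) (replicateRow Unit (-z • w)) 1).det := by
    rw [det_fromBlocks_one₂₂]
    congr 1
    ext i j
    simp [vecMulVec, Matrix.mul_apply]
    ring
  have h2 : fromBlocks M (replicateCol Unit u) (replicateRow Unit (-z • w)) 1 =
      updateRow B (Sum.inr ()) (Sum.elim (0 : n → ℂ) (1 : Unit → ℂ) + z • Sum.elim (-w) 0) := by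
    ext i j
    rcases i with i | i <;> rcases j with j | j <;> simp [B, updateRow_apply]
  have h3 : updateRow B (Sum.inr ()) (Sum.elim (0 : n → ℂ) (1 : Unit → ℂ)) = B := by
    ext i j
    rcases i with i | i <;> rcases j with j | j <;> simp [B, updateRow_apply]
  rw [h1, h2, det_updateRow_add, det_updateRow_smul, h3]
  simp [B]

lemma Above.add {p : Matrix n n ℂ → ℂ} {M Y : Matrix n n ℂ} (h : Above p M)
    (hY : Y.PosSemidef) : Above p (M + Y) := by
  intro Z hZ
  rw [add_assoc]
  exact h _ (hY.add hZ)

lemma Above.pos {p : Matrix n n ℂ → ℂ} {M : Matrix n n ℂ} (h : Above p M) : 0 < (p M).re := by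
  simpa using h 0 PosSemidef.zero

lemma above_det {M : Matrix n n ℂ} (h : M.PosDef) : Above det M := by
  intro Y hY
  have := (h.add_posSemidef hY).det_pos
  exact (Complex.pos_iff.1 this).1

lemma good_det : Good (det : Matrix n n ℂ → ℂ) where
  aff M v z := by
    obtain ⟨c, hc⟩ := det_aff M v (star v)
    have h1 := hc (-1)
    have h2 : M - R v = M + (-1 : ℂ) • vecMulVec v (star v) := by
      simp [R, sub_eq_add_neg]
    rw [h2, h1, R, hc]
    ring
  stab X Y hX hY := by
    intro h
    obtain ⟨x, hx, h0⟩ := exists_mulVec_eq_zero_iff.2 h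
    have h1 := hY.dotProduct_mulVec_pos hx
    have h2 : star x ⬝ᵥ ((X + I • Y) *ᵥ x) = 0 := by rw [h0]; simp
    rw [add_mulVec, smul_mulVec, dotProduct_add, dotProduct_smul] at h2
    have h3 : (star x ⬝ᵥ X *ᵥ x).im = 0 := by
      have := hX.im_star_dotProduct_mulVec_self x
      simpa using this
    have h4 := congrArg Complex.im h2
    rw [Complex.add_im, h3] at h4
    have h5 := (Complex.pos_iff.1 h1).1
    simp at h4
    linarith
  real X hX := by
    have h := congrArg det hX
    rw [det_conjTranspose] at h
    exact Complex.conj_eq_iff_im.1 h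
  big X hX := by
    refine ⟨X * X + 1, ?_, ?_⟩
    · have := posSemidef_conjTranspose_mul_self X
      rw [hX.eq] at this
      exact this.add PosSemidef.one
    · apply above_det
      have h1 := posSemidef_conjTranspose_mul_self (X + (1/2 : ℂ) • 1)
      have h2 : (X + (1/2 : ℂ) • 1)ᴴ = X + (1/2 : ℂ) • 1 := by
        rw [conjTranspose_add, hX.eq, conjTranspose_smul]
        simp
      rw [h2] at h1
      have h3 : ((3/4 : ℝ) • (1 : Matrix n n ℂ)).PosDef := PosDef.one.smul (by norm_num)
      have h4 := PosDef.posSemidef_add h1 h3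
      convert h4 using 1
      rw [mul_add, add_mul, add_mul]
      ext i j
      simp [Matrix.add_apply, Matrix.smul_apply]
      ring
  cont := by fun_prop

/-- averaging operator -/
def Tm (a b : n → ℂ) (t : ℝ) (p : Matrix n n ℂ → ℂ) : Matrix n n ℂ → ℂ :=
  fun M => (t : ℂ) * p (M - R a) + ((1 - t : ℝ) : ℂ) * p (M - R b)

lemma key_im (A B : ℂ) (h : ∀ z : ℂ, 0 ≤ z.im → A + z * B ≠ 0) :
    (B * starRingEnd ℂ A).im < 0 ∨ B = 0 := by
  by_contra! hc
  obtain ⟨h1, h2⟩ := hc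
  refine h (-A / B) ?_ (by field_simp; ring)
  have h3 : -A / B = (-(A * starRingEnd ℂ B)) * ((normSq B)⁻¹ : ℝ) := by
    rw [Complex.ofReal_inv, ← Complex.mul_conj]
    have : starRingEnd ℂ B ≠ 0 := by simpa using h2
    field_simp
  rw [h3, Complex.im_mul_ofReal]
  apply mul_nonneg _ (inv_nonneg.2 (normSq_nonneg _))
  simp at h1 ⊢
  linarith

lemma good_T {p : Matrix n n ℂ → ℂ} (hp : Good p) (a b : n → ℂ) {t : ℝ} (h0 : 0 ≤ t)
    (h1 : t ≤ 1) : Good (Tm a b t p) where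
  aff M v z := by
    have e1 : ∀ c : n → ℂ, M + z • R v - R c = (M - R c) + z • R v := fun c => by abel
    have e2 : ∀ c : n → ℂ, M - R v - R c = (M - R c) - R v := fun c => by abel
    simp only [Tm, e1, e2, hp.aff]
    ring
  stab X Y hX hY := by
    have key : ∀ v : n → ℂ, ((p (X + I • Y) - p (X + I • Y - R v)) *
        starRingEnd ℂ (p (X + I • Y))).im < 0 ∨
        (p (X + I • Y) - p (X + I • Y - R v)) = 0 := by
      intro v
      apply key_im
      intro z hz
      rw [← hp.aff]
      have : X + I • Y + z • R v = (X + z.re • R v) + I • (Y + z.im • R v) := by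
        ext i j
        simp only [Matrix.add_apply, Matrix.smul_apply, smul_eq_mul, Complex.real_smul]
        conv_lhs => rw [← Complex.re_add_im z]
        ring
      rw [this]
      apply hp.stab
      · exact hX.add ((R_psd v).isHermitian.smul (by simp [IsSelfAdjoint]))
      · exact hY.add_posSemidef ((R_psd v).smul hz)
    have hA := hp.stab X Y hX hY
    set A := p (X + I • Y) with hAdef
    have ha := key a
    have hb := key b
    set xa := p (X + I • Y - R a) with hxa
    set xb := p (X + I • Y - R b) with hxb
    intro hT
    have hT' : (t : ℂ) * xa + ((1 - t : ℝ) : ℂ) * xb = 0 := hT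
    have hns : 0 < normSq A := normSq_pos.2 hA
    have e : (t : ℂ) * ((A - xa) * starRingEnd ℂ A) +
        ((1 - t : ℝ) : ℂ) * ((A - xb) * starRingEnd ℂ A) = (normSq A : ℂ) := by
      rw [← Complex.mul_conj]
      push_cast at hT' ⊢
      linear_combination (-starRingEnd ℂ A) * hT'
    have eim := congrArg Complex.im e
    have ere := congrArg Complex.re e
    simp only [Complex.add_im, Complex.add_re, Complex.im_ofReal_mul, Complex.re_ofReal_mul,
      Complex.ofReal_im, Complex.ofReal_re] at eim ere
    rcases ha with ha | ha <;> rcases hb with hb | hb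
    · rcases h0.eq_or_lt with h | h
      · rw [← h] at eim
        linarith
      · nlinarith [mul_pos_of_neg_of_neg ha (neg_lt_zero.2 h), mul_nonneg (sub_nonneg.2 h1) (neg_nonneg.2 hb.le)]
    · rw [hb] at eim ere
      simp only [zero_mul, Complex.zero_im, Complex.zero_re, mul_zero, add_zero] at eim ere
      rcases mul_eq_zero.1 eim with h | h
      · rw [h] at ere; simp at ere; exact hns.ne ere
      · linarith
    · rw [ha] at eim ere
      simp only [zero_mul, Complex.zero_im, Complex.zero_re, mul_zero, zero_add] at eim ere
      rcases mul_eq_zero.1 eim with h | h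
      · rw [h] at ere; simp at ere; exact hns.ne ere
      · linarith
    · rw [hb, ha] at ere
      simp at ere; exact hns.ne ere
  real X hX := by
    have ha := hp.real _ (hX.sub (R_psd a).isHermitian)
    have hb := hp.real _ (hX.sub (R_psd b).isHermitian)
    simp only [Tm, Complex.add_im, Complex.im_ofReal_mul, ha, hb]
    simp
  big X hX := by
    obtain ⟨Z1, hZ1, h1'⟩ := hp.big _ (hX.sub (R_psd a).isHermitian)
    obtain ⟨Z2, hZ2, h2'⟩ := hp.big _ (hX.sub (R_psd b).isHermitian)
    refine ⟨Z1 + Z2, hZ1.add hZ2, fun Y hY => ?_⟩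
    have e1 := h1' (Z2 + Y) (hZ2.add hY)
    have e2 := h2' (Z1 + Y) (hZ1.add hY)
    have f1 : X + (Z1 + Z2) + Y - R a = X - R a + Z1 + (Z2 + Y) := by abel
    have f2 : X + (Z1 + Z2) + Y - R b = X - R b + Z2 + (Z1 + Y) := by abel
    simp only [Tm, Complex.add_re, Complex.re_ofReal_mul, f1, f2]
    rcases h0.eq_or_lt with h | h
    · rw [← h]; simpa using e2
    · have := mul_pos h e1
      have := mul_nonneg (sub_nonneg.2 h1) e2.le
      linarith
  cont := by
    have := hp.cont
    unfold Tm
    fun_prop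

/-- Rayleigh inequality -/
lemma rayleigh {p : Matrix n n ℂ → ℂ} (hp : Good p) {X : Matrix n n ℂ} (hX : X.IsHermitian)
    (a v : n → ℂ) :
    (p X).re * (p (X - R a - R v)).re ≤ (p (X - R a)).re * (p (X - R v)).re := by
  let A : ℝ → ℂ := fun η => p (X + (η : ℂ) • (I • 1) + I • R a)
  let B : ℝ → ℂ := fun η => A η - p (X + (η : ℂ) • (I • 1) + I • R a - R v)
  have hc := hp.cont
  have cA : Continuous A := by fun_prop
  have cB : Continuous B := by fun_prop
  let F : ℝ → ℝ := fun η => (B η * starRingEnd ℂ (A η)).im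
  have cF : Continuous F := by
    apply Complex.continuous_im.comp
    exact cB.mul (Complex.continuous_conj.comp cA)
  have hneg : ∀ η : ℝ, 0 < η → F η ≤ 0 := by
    intro η hη
    have := key_im (A η) (B η) (by
      intro z hz
      change p _ + z * (p _ - p _) ≠ 0
      rw [← hp.aff]
      have : X + (η : ℂ) • (I • 1) + I • R a + z • R v =
          (X + z.re • R v) + I • ((η • 1 + R a) + z.im • R v) := by
        ext i j
        simp only [Matrix.add_apply, Matrix.smul_apply, smul_eq_mul, Complex.real_smul]
        conv_lhs => rw [← Complex.re_add_im z]
        ring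
      rw [this]
      apply hp.stab
      · exact hX.add ((R_psd v).isHermitian.smul (by simp [IsSelfAdjoint]))
      · exact ((PosDef.one.smul hη).add_posSemidef (R_psd a)).add_posSemidef ((R_psd v).smul hz))
    rcases this with h | h
    · exact h.le
    · simp [F, h]
  have h0 : F 0 ≤ 0 := by
    have h1 : Tendsto F (nhdsWithin 0 (Set.Ioi 0)) (nhds (F 0)) :=
      (cF.tendsto 0).mono_left nhdsWithin_le_nhds
    exact le_of_tendsto h1 (eventually_nhdsWithin_of_forall hneg)
  have eA : A 0 = p X + I * (p X - p (X - R a)) := by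
    simp only [A, Complex.ofReal_zero, zero_smul, add_zero, hp.aff]
  have eB : B 0 = A 0 - (p (X - R v) + I * (p (X - R v) - p (X - R a - R v))) := by
    have : X + I • R a - R v = (X - R v) + I • R a := by abel
    simp only [B, Complex.ofReal_zero, zero_smul, add_zero, this, hp.aff]
    rw [show X - R v - R a = X - R a - R v by abel]
  have r1 := hp.real _ hX
  have r2 := hp.real _ (hX.sub (R_psd a).isHermitian)
  have r3 := hp.real _ (hX.sub (R_psd v).isHermitian)
  have r4 := hp.real _ ((hX.sub (R_psd a).isHermitian).sub (R_psd v).isHermitian)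
  simp only [F, eB, eA] at h0
  simp [r1, r2, r3, r4] at h0
  linarith



lemma reaff {p : Matrix n n ℂ → ℂ} (hp : Good p) (M : Matrix n n ℂ) (v : n → ℂ) (s : ℝ) :
    (p (M + (s : ℂ) • R v)).re = (p M).re + s * ((p M).re - (p (M - R v)).re) := by
  rw [hp.aff, Complex.add_re, Complex.re_ofReal_mul, Complex.sub_re]

lemma reaff2 {p : Matrix n n ℂ → ℂ} (hp : Good p) (M : Matrix n n ℂ) (a b : n → ℂ) (y z : ℝ) :
    (p (M + (y : ℂ) • R a + (z : ℂ) • R b)).re = (p M).re + y * ((p M).re - (p (M - R a)).re)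
      + z * ((p M).re - (p (M - R b)).re) + y * z * ((p M).re - (p (M - R a)).re
        - (p (M - R b)).re + (p (M - R a - R b)).re) := by
  rw [reaff hp, reaff hp]
  have : M + (y : ℂ) • R a - R b = (M - R b) + (y : ℂ) • R a := by abel
  rw [this, reaff hp, show M - R b - R a = M - R a - R b by abel]
  ring

lemma psd_ind {P : Matrix n n ℂ → Prop} (h0 : P 0)
    (hadd : ∀ Y v, Y.PosSemidef → P Y → P (Y + R v)) {Y : Matrix n n ℂ} (hY : Y.PosSemidef) :
    P Y := by
  obtain ⟨m, v, rfl⟩ := posSemidef_iff_eq_sum_vecMulVec.1 hY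
  have : ∀ s : Finset (Fin m), (∑ i ∈ s, R (v i)).PosSemidef ∧ P (∑ i ∈ s, R (v i)) := by
    intro s
    classical
    induction s using Finset.induction_on with
    | empty => exact ⟨by simpa using PosSemidef.zero, by simpa using h0⟩
    | insert i s hi ih =>
      rw [Finset.sum_insert hi, add_comm]
      exact ⟨ih.1.add (R_psd _), hadd _ _ ih.1 ih.2⟩
  exact (this Finset.univ).2

lemma mono {p : Matrix n n ℂ → ℂ} (hp : Good p) {M : Matrix n n ℂ} (hM : M.IsHermitian)
    (h : Above p M) (v : n → ℂ) {Y : Matrix n n ℂ} (hY : Y.PosSemidef) :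
    (p (M - R v)).re * (p (M + Y)).re ≤ (p (M + Y - R v)).re * (p M).re := by
  refine psd_ind (P := fun Y => (p (M - R v)).re * (p (M + Y)).re
    ≤ (p (M + Y - R v)).re * (p M).re) (by simp) ?_ hY
  intro Y a hY ih
  have hr := rayleigh hp (X := M + (Y + R a)) (hM.add (hY.add (R_psd a)).isHermitian) a v
  have e1 : M + (Y + R a) - R a = M + Y := by abel
  rw [e1] at hr
  have q0 := h.pos
  have q1 := h Y hY
  have q2 := h _ (hY.add (R_psd a))
  have h1 := mul_le_mul_of_nonneg_right ih q2.le
  have h2 := mul_le_mul_of_nonneg_left hr q0.le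
  refine le_of_mul_le_mul_right ?_ q1
  nlinarith

lemma dec_nonneg {p : Matrix n n ℂ → ℂ} (hp : Good p) {M : Matrix n n ℂ}
    (h : Above p M) (v : n → ℂ) : (p (M - R v)).re ≤ (p M).re := by
  by_contra! hc
  have h0 := h.pos
  have hd : 0 < (p (M - R v)).re - (p M).re := by linarith
  have h1 := h (((((p M).re / ((p (M - R v)).re - (p M).re) : ℝ)) : ℂ) • R v) (by
    have : 0 ≤ (p M).re / ((p (M - R v)).re - (p M).re) := by positivity
    exact (R_psd v).smul (Complex.zero_le_real.2 this))
  rw [reaff hp] at h1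
  have h2 : (p M).re / ((p (M - R v)).re - (p M).re) * ((p M).re - (p (M - R v)).re)
    = - (p M).re := by
    field_simp
    ring
  linarith

/-- removing the average -/
lemma above_of_T {p : Matrix n n ℂ → ℂ} (hp : Good p) {M : Matrix n n ℂ} (hM : M.IsHermitian)
    (a b : n → ℂ) {t : ℝ} (h0 : 0 ≤ t) (h1 : t ≤ 1) (h : Above (Tm a b t p) M) :
    Above p M := by
  obtain ⟨Z, hZ, hA⟩ := hp.big M hM
  have key : ∀ Y : Matrix n n ℂ, Y.PosSemidef →
      ∀ W : Matrix n n ℂ, W.PosSemidef → Above p (M + W + Y) → Above p (M + W) := by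
    intro Y hY
    refine psd_ind (P := fun Y => ∀ W : Matrix n n ℂ, W.PosSemidef →
      Above p (M + W + Y) → Above p (M + W)) (by simp) ?_ hY
    intro Y v hY ih W hW hWY
    refine ih W hW ?_
    intro U hU
    by_contra! hc
    have hpos := hWY U hU
    set N := M + W + Y + U with hN
    have e1 : M + W + (Y + R v) + U = N + ((1 : ℝ) : ℂ) • R v := by
      simp [hN]; abel
    rw [e1, reaff hp] at hpos
    set D := (p N).re - (p (N - R v)).re with hD
    have hDpos : 0 < D := by linarith
    set z := - (p N).re / D with hz
    have hz0 : 0 ≤ z := div_nonneg (by linarith) hDpos.le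
    set N' := N + (z : ℂ) • R v with hN'
    have hW' : (W + Y + U + (z : ℂ) • R v).PosSemidef :=
      ((hW.add hY).add hU).add ((R_psd v).smul (Complex.zero_le_real.2 hz0))
    have eN' : N' = M + (W + Y + U + (z : ℂ) • R v) := by
      rw [hN', hN]; abel
    have hN'h : N'.IsHermitian := by rw [eN']; exact hM.add hW'.isHermitian
    have p0 : (p N').re = 0 := by
      rw [hN', reaff hp, ← hD, hz]
      field_simp
      ring
    have pv : (p (N' - R v)).re = - D := by
      have : N' - R v = N + ((z - 1 : ℝ) : ℂ) • R v := by
        rw [hN']; push_cast; rw [sub_smul, one_smul]; abel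
      rw [this, reaff hp, ← hD, hz]
      field_simp
      ring
    have hneg : ∀ c : n → ℂ, (p (N' - R c)).re ≤ 0 := by
      intro c
      have := rayleigh hp hN'h c v
      rw [p0, pv] at this
      nlinarith
    have hT := h _ hW'
    rw [← eN'] at hT
    simp only [Tm, Complex.add_re, Complex.re_ofReal_mul] at hT
    nlinarith [mul_nonneg h0 (neg_nonneg.2 (hneg a)),
      mul_nonneg (sub_nonneg.2 h1) (neg_nonneg.2 (hneg b))]
  have := key Z hZ 0 PosSemidef.zero (by simpa using hA)
  simpa using this

lemma above_sub {p : Matrix n n ℂ → ℂ} (hp : Good p) {M : Matrix n n ℂ} (hM : M.IsHermitian)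
    (h : Above p M) (a : n → ℂ) (ha : 0 < (p (M - R a)).re) : Above p (M - R a) := by
  intro Y hY
  have h1 := mono hp hM h a hY
  have h2 := mul_pos ha (h Y hY)
  rw [show M - R a + Y = M + Y - R a by abel]
  exact pos_of_mul_pos_left (h2.trans_le h1) h.pos.le

lemma select {p : Matrix n n ℂ → ℂ} (hp : Good p) {M : Matrix n n ℂ} (hM : M.IsHermitian)
    (a b : n → ℂ) {t : ℝ} (h0 : 0 ≤ t) (h1 : t ≤ 1) (h : Above (Tm a b t p) M) :
    Above p (M - R a) ∨ Above p (M - R b) := by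
  have hA := above_of_T hp hM a b h0 h1 h
  have hT := h.pos
  simp only [Tm, Complex.add_re, Complex.re_ofReal_mul] at hT
  by_cases ha : 0 < (p (M - R a)).re
  · exact Or.inl (above_sub hp hM hA a ha)
  by_cases hb : 0 < (p (M - R b)).re
  · exact Or.inr (above_sub hp hM hA b hb)
  exfalso
  push Not at ha hb
  nlinarith [mul_nonneg h0 (neg_nonneg.2 ha),
      mul_nonneg (sub_nonneg.2 h1) (neg_nonneg.2 hb)]

lemma quad (h0 h1 h2 k0 k1 k2 δ : ℝ) (hpos : 0 < h0) (hh2 : 0 ≤ h2)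
    (hV : ∀ s : ℝ, 0 ≤ (k1*h0 - k0*h1) + 2*(k2*h0-k0*h2)*s + (k2*h1-k1*h2)*s^2)
    (hδ1 : 1 ≤ δ) (hδ2 : δ ≤ 2) (hc : h1 * δ ≤ h0 * (δ - 1)) :
    k0 * ((h0 + h1*δ + h2*δ^2) - (h1 + 2*h2*δ)) ≤
      ((k0 + k1*δ+k2*δ^2) - (k1+2*k2*δ)) * h0 := by
  set α := k1*h0 - k0*h1 with hα
  set β := k2*h0-k0*h2 with hβ
  set γ := k2*h1-k1*h2 with hγ
  have rel : h1 * β = h2 * α + h0 * γ := by rw [hα, hβ, hγ]; ring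
  have hα0 : 0 ≤ α := by simpa using hV 0
  have hdisc : β^2 ≤ α * γ := by
    have := discrim_le_zero (a := γ) (b := 2*β) (c := α) (fun x => by nlinarith [hV x])
    unfold discrim at this
    nlinarith
  have goal : β * δ * (2 - δ) ≤ α * (δ - 1) := by
    rcases le_or_gt β 0 with hb | hb
    · have : 0 ≤ (-β) * δ * (2 - δ) :=
        mul_nonneg (mul_nonneg (by linarith) (by linarith)) (by linarith)
      have : 0 ≤ α * (δ - 1) := mul_nonneg hα0 (by linarith)
      linarith
    · have i1 : h0 * γ ≤ h1 * β := by nlinarith [mul_nonneg hh2 hα0]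
      have i2 : h0 * β ^ 2 ≤ α * (h1 * β) := by
        nlinarith [mul_le_mul_of_nonneg_left i1 hα0, mul_le_mul_of_nonneg_left hdisc hpos.le]
      have i3 : h0 * β ≤ α * h1 := by
        refine le_of_mul_le_mul_right ?_ hb
        nlinarith
      have i4 : h0 * (β * δ) ≤ h0 * (α * (δ - 1)) := by
        nlinarith [mul_le_mul_of_nonneg_left hc hα0,
          mul_le_mul_of_nonneg_right i3 (by linarith : (0:ℝ) ≤ δ)]
      have i5 : β * δ ≤ α * (δ - 1) := le_of_mul_le_mul_left i4 hpos
      have i6 : 0 ≤ α * (δ - 1) := mul_nonneg hα0 (by linarith)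
      nlinarith [mul_le_mul_of_nonneg_right i5 (by linarith : (0:ℝ) ≤ 2 - δ),
        mul_nonneg i6 (by linarith : (0:ℝ) ≤ δ - 1)]
  nlinarith

/-- expectation matrix -/
def Em (a b : n → ℂ) (t : ℝ) : Matrix n n ℂ := (t : ℂ) • R a + ((1 - t : ℝ) : ℂ) • R b

lemma Em_psd (a b : n → ℂ) {t : ℝ} (h0 : 0 ≤ t) (h1 : t ≤ 1) : (Em a b t).PosSemidef :=
  ((R_psd a).smul (Complex.zero_le_real.2 h0)).add
    ((R_psd b).smul (Complex.zero_le_real.2 (sub_nonneg.2 h1)))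

lemma Em_line (M : Matrix n n ℂ) (a b : n → ℂ) (t s : ℝ) :
    M + (s : ℂ) • Em a b t = M + ((s * t : ℝ) : ℂ) • R a + ((s * (1 - t) : ℝ) : ℂ) • R b := by
  rw [Em, smul_add, smul_smul, smul_smul]
  push_cast
  abel

lemma step {p : Matrix n n ℂ → ℂ} (hp : Good p) {M : Matrix n n ℂ} (hM : M.IsHermitian)
    (h : Above p M) (a b : n → ℂ) {t δ : ℝ} (ht0 : 0 ≤ t) (ht1 : t ≤ 1) (hδ1 : 1 ≤ δ)
    (hδ2 : δ ≤ 2)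
    (hE : (p M).re ≤ δ * (t * (p (M - R a)).re + (1 - t) * (p (M - R b)).re)) :
    Above (Tm a b t p) (M + (δ : ℂ) • Em a b t) ∧
    ∀ v, (p (M - R v)).re * (Tm a b t p (M + (δ : ℂ) • Em a b t)).re ≤
      (Tm a b t p (M + (δ : ℂ) • Em a b t - R v)).re * (p M).re := by
  have hp0 := h.pos
  constructor
  · intro Y hY
    have hZ : ((δ : ℂ) • Em a b t + Y).PosSemidef :=
      ((Em_psd a b ht0 ht1).smul (Complex.zero_le_real.2 (by linarith))).add hY
    rw [add_assoc]
    set Z := (δ : ℂ) • Em a b t + Y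
    have h1 := mul_le_mul_of_nonneg_left (mono hp hM h a hZ) ht0
    have h2 := mul_le_mul_of_nonneg_left (mono hp hM h b hZ) (sub_nonneg.2 ht1)
    have h3 := h Z hZ
    simp only [Tm, Complex.add_re, Complex.re_ofReal_mul]
    have h4 : 0 < t * (p (M - R a)).re + (1 - t) * (p (M - R b)).re :=
      pos_of_mul_pos_right (hp0.trans_le hE) (by linarith)
    have h5 := mul_pos h4 h3
    refine pos_of_mul_pos_left ?_ hp0.le
    linarith
  · intro v
    have hF := reaff2 hp M a b
    have hG := reaff2 hp (M - R v) a b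
    set x := (p M).re
    set xa := (p (M - R a)).re
    set xb := (p (M - R b)).re
    set xab := (p (M - R a - R b)).re
    set y := (p (M - R v)).re
    set ya := (p (M - R v - R a)).re
    set yb := (p (M - R v - R b)).re
    set yab := (p (M - R v - R a - R b)).re
    have ha := dec_nonneg hp h a
    have hb := dec_nonneg hp h b
    -- quadratic coefficient
    have hh2 : 0 ≤ t * (1 - t) * (x - xa - xb + xab) := by
      by_contra! hc
      have hs : ∀ s : ℝ, 0 ≤ s → 0 < x + (t * (x - xa) + (1 - t) * (x - xb)) * s +
          t * (1 - t) * (x - xa - xb + xab) * s ^ 2 := by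
        intro s hs
        have := h ((s : ℂ) • Em a b t)
          ((Em_psd a b ht0 ht1).smul (Complex.zero_le_real.2 hs))
        rw [Em_line, hF] at this
        linarith
      have hh1 : 0 ≤ t * (x - xa) + (1 - t) * (x - xb) :=
        add_nonneg (mul_nonneg ht0 (by linarith)) (mul_nonneg (by linarith) (by linarith))
      set h1 := t * (x - xa) + (1 - t) * (x - xb)
      set h2 := t * (1 - t) * (x - xa - xb + xab)
      have := hs ((x + h1) / (-h2) + 1) (by
        have : 0 < -h2 := by linarith
        positivity)
      set s := (x + h1) / (-h2) + 1 with hsdef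
      have hs1 : 1 ≤ s := by
        have : 0 < -h2 := by linarith
        have : 0 ≤ (x + h1) / (-h2) := by positivity
        linarith
      have hs2 : (-h2) * s = x + h1 + (-h2) := by
        have hne : h2 ≠ 0 := hc.ne
        rw [hsdef]; field_simp; ring
      nlinarith
    have hV : ∀ s : ℝ, 0 ≤
        ((t * (y - ya) + (1 - t) * (y - yb)) * x - y * (t * (x - xa) + (1 - t) * (x - xb)))
        + 2 * ((t * (1 - t) * (y - ya - yb + yab)) * x - y * (t * (1 - t) * (x - xa - xb + xab)))
          * s
        + ((t * (1 - t) * (y - ya - yb + yab)) * (t * (x - xa) + (1 - t) * (x - xb)) -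
          (t * (y - ya) + (1 - t) * (y - yb)) * (t * (1 - t) * (x - xa - xb + xab))) * s ^ 2 := by
      intro s
      have hX : (M + (s : ℂ) • Em a b t).IsHermitian := by
        refine hM.add ?_
        exact (Em_psd a b ht0 ht1).isHermitian.smul (by simp [IsSelfAdjoint])
      have ra := rayleigh hp hX a v
      have rb := rayleigh hp hX b v
      rw [Em_line] at ra rb
      set Y := (s * t : ℝ)
      set Z := (s * (1 - t) : ℝ)
      have e1 : M + (Y : ℂ) • R a + (Z : ℂ) • R b - R a =
          M + ((Y - 1 : ℝ) : ℂ) • R a + (Z : ℂ) • R b := by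
        push_cast; rw [sub_smul, one_smul]; abel
      have e2 : M + (Y : ℂ) • R a + (Z : ℂ) • R b - R b =
          M + (Y : ℂ) • R a + ((Z - 1 : ℝ) : ℂ) • R b := by
        push_cast; rw [sub_smul, one_smul]; abel
      have e3 : ∀ Y Z : ℝ, M + (Y : ℂ) • R a + (Z : ℂ) • R b - R v =
          M - R v + (Y : ℂ) • R a + (Z : ℂ) • R b := fun Y Z => by abel
      rw [e1, e3, e3, hF, hF, hG, hG] at ra
      rw [e2, e3, e3, hF, hF, hG, hG] at rb
      have ra' := mul_le_mul_of_nonneg_left ra ht0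
      have rb' := mul_le_mul_of_nonneg_left rb (sub_nonneg.2 ht1)
      have := add_le_add ra' rb'
      rw [← sub_nonneg] at this
      refine this.trans_eq ?_
      simp only [Y, Z]
      ring
    have := quad x (t * (x - xa) + (1 - t) * (x - xb)) (t * (1 - t) * (x - xa - xb + xab))
      y (t * (y - ya) + (1 - t) * (y - yb)) (t * (1 - t) * (y - ya - yb + yab)) δ hp0
      hh2 hV hδ1 hδ2 (by nlinarith)
    rw [Em_line]
    simp only [Tm, Complex.add_re, Complex.re_ofReal_mul]
    have e1 : M + ((δ * t : ℝ) : ℂ) • R a + ((δ * (1 - t) : ℝ) : ℂ) • R b - R a =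
          M + ((δ * t - 1 : ℝ) : ℂ) • R a + ((δ * (1 - t) : ℝ) : ℂ) • R b := by
        push_cast; rw [sub_smul _ (1 : ℂ), one_smul]; abel
    have e2 : M + ((δ * t : ℝ) : ℂ) • R a + ((δ * (1 - t) : ℝ) : ℂ) • R b - R b =
          M + ((δ * t : ℝ) : ℂ) • R a + ((δ * (1 - t) - 1 : ℝ) : ℂ) • R b := by
        push_cast; rw [sub_smul _ (1 : ℂ), one_smul]; abel
    have e3 : ∀ Y Z : ℝ, M + (Y : ℂ) • R a + (Z : ℂ) • R b - R v =
          M - R v + (Y : ℂ) • R a + (Z : ℂ) • R b := fun Y Z => by abel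
    rw [sub_right_comm _ (R v) (R a), sub_right_comm _ (R v) (R b), e1, e2, e3, e3, hF, hF, hG, hG]
    refine le_trans (le_of_eq ?_) (this.trans_eq ?_)
    · ring
    · ring


/-- iterated average -/
def mixP {ι : Type*} (a b : ι → n → ℂ) (t : ι → ℝ) : List ι → Matrix n n ℂ → ℂ
  | [] => det
  | i :: L => Tm (a i) (b i) (t i) (mixP a b t L)

lemma good_mixP {ι : Type*} (a b : ι → n → ℂ) (t : ι → ℝ) (h0 : ∀ i, 0 ≤ t i)
    (h1 : ∀ i, t i ≤ 1) (L : List ι) : Good (mixP a b t L) := by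
  induction L with
  | nil => exact good_det
  | cons i L ih => exact good_T ih _ _ (h0 i) (h1 i)

lemma herm_sum {ι : Type*} (f : ι → Matrix n n ℂ) (hf : ∀ i, (f i).PosSemidef) (L : List ι) :
    (L.map f).sum.PosSemidef := by
  induction L with
  | nil => simpa using PosSemidef.zero
  | cons i L ih => simpa using (hf i).add ih

lemma barrier {ι : Type*} (a b : ι → n → ℂ) (t : ι → ℝ) (h0 : ∀ i, 0 ≤ t i)
    (h1 : ∀ i, t i ≤ 1) {δ : ℝ} (hδ1 : 1 ≤ δ) (hδ2 : δ ≤ 2) {M : Matrix n n ℂ}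
    (hM : M.PosDef) (V : Set (n → ℂ)) (ha : ∀ i, a i ∈ V) (hb : ∀ i, b i ∈ V)
    (hV : ∀ v ∈ V, (det M).re ≤ δ * (det (M - R v)).re) (L : List ι) :
    Above (mixP a b t L) (M + (δ : ℂ) • (L.map fun i => Em (a i) (b i) (t i)).sum) ∧
    ∀ v ∈ V, (mixP a b t L (M + (δ : ℂ) • (L.map fun i => Em (a i) (b i) (t i)).sum)).re ≤
      δ * (mixP a b t L (M + (δ : ℂ) • (L.map fun i => Em (a i) (b i) (t i)).sum - R v)).re := by
  induction L with
  | nil => simpa [mixP] using ⟨above_det hM, hV⟩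
  | cons i L ih =>
    obtain ⟨ih1, ih2⟩ := ih
    have hN : (M + (δ : ℂ) • (L.map fun i => Em (a i) (b i) (t i)).sum).IsHermitian := by
      refine (hM.add_posSemidef ?_).isHermitian
      exact (herm_sum _ (fun i => Em_psd (a i) (b i) (h0 i) (h1 i)) L).smul
        (Complex.zero_le_real.2 (by linarith))
    have e : M + (δ : ℂ) • ((i :: L).map fun i => Em (a i) (b i) (t i)).sum =
        M + (δ : ℂ) • (L.map fun i => Em (a i) (b i) (t i)).sum
          + (δ : ℂ) • Em (a i) (b i) (t i) := by
      rw [List.map_cons, List.sum_cons, smul_add]; abel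
    rw [e]
    set N := M + (δ : ℂ) • (L.map fun i => Em (a i) (b i) (t i)).sum
    have hst := step (good_mixP a b t h0 h1 L) hN ih1 (a i) (b i) (h0 i) (h1 i) hδ1 hδ2 (by
      have q1 := mul_le_mul_of_nonneg_left (ih2 _ (ha i)) (h0 i)
      have q2 := mul_le_mul_of_nonneg_left (ih2 _ (hb i)) (sub_nonneg.2 (h1 i))
      nlinarith)
    refine ⟨hst.1, fun v hv => ?_⟩
    have q1 := hst.2 v
    have q2 := ih2 v hv
    have q3 := hst.1.pos
    have q4 := ih1.pos
    simp only [mixP]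
    refine le_of_mul_le_mul_right ?_ q4
    nlinarith [mul_le_mul_of_nonneg_right q2 q3.le,
      mul_le_mul_of_nonneg_left q1 (by linarith : (0:ℝ) ≤ δ)]

lemma choose_outcome {ι : Type*} [DecidableEq ι] (a b : ι → n → ℂ) (t : ι → ℝ)
    (h0 : ∀ i, 0 ≤ t i) (h1 : ∀ i, t i ≤ 1) (L : List ι) (hL : L.Nodup) {M : Matrix n n ℂ}
    (hM : M.IsHermitian) (h : Above (mixP a b t L) M) :
    ∃ c : ι → Bool, Above det (M - (L.map fun i => R (if c i then a i else b i)).sum) := by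
  induction L generalizing M with
  | nil => exact ⟨fun _ => true, by simpa [mixP] using h⟩
  | cons i L ih =>
    obtain ⟨hi, hL'⟩ := List.nodup_cons.1 hL
    have main : ∀ β : Bool, Above (mixP a b t L) (M - R (if β then a i else b i)) →
        ∃ c : ι → Bool,
          Above det (M - ((i :: L).map fun i => R (if c i then a i else b i)).sum) := by
      intro β hβ
      obtain ⟨c, hc⟩ := ih hL' (hM.sub (R_psd _).isHermitian) hβ
      refine ⟨Function.update c i β, ?_⟩
      rw [List.map_cons, List.sum_cons, ← sub_sub]
      have e : (L.map fun j => R (if Function.update c i β j then a j else b j)) =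
          L.map fun j => R (if c j then a j else b j) := by
        apply List.map_congr_left
        intro j hj
        have : j ≠ i := fun e => hi (e ▸ hj)
        simp [Function.update_of_ne this]
      rw [e]
      simpa using hc
    rcases select (good_mixP a b t h0 h1 L) hM (a i) (b i) (h0 i) (h1 i) h with h | h
    · exact main true (by simpa using h)
    · exact main false (by simpa using h)

lemma posDef_of_above {N : Matrix n n ℂ} (hN : N.IsHermitian) (h : Above det N) : N.PosDef := by
  rw [hN.posDef_iff_eigenvalues_pos]
  intro i
  by_contra! hc
  have h1 := h (((-hN.eigenvalues i : ℝ) : ℂ) • 1)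
    (PosSemidef.one.smul (Complex.zero_le_real.2 (by linarith)))
  have h2 : det (N + ((-hN.eigenvalues i : ℝ) : ℂ) • 1) = 0 := by
    rw [← exists_mulVec_eq_zero_iff]
    refine ⟨(hN.eigenvectorBasis i).ofLp, ?_, ?_⟩
    · intro h0
      exact hN.eigenvectorBasis.orthonormal.ne_zero i (by ext j; exact congrFun h0 j)
    · rw [add_mulVec, hN.mulVec_eigenvectorBasis, smul_mulVec, one_mulVec]
      ext j
      simp
  rw [h2] at h1
  simp at h1

lemma det_sub_R {τ : ℝ} (hτ : 0 < τ) (v : n → ℂ) :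
    (det (((τ : ℝ) : ℂ) • (1 : Matrix n n ℂ) - R v)).re =
      (1 - (∑ i, ‖v i‖ ^ 2) / τ) * (det (((τ : ℝ) : ℂ) • (1 : Matrix n n ℂ))).re := by
  have hτ' : (τ : ℂ) ≠ 0 := by exact_mod_cast hτ.ne'
  have h1 : ((τ : ℝ) : ℂ) • (1 : Matrix n n ℂ) - R v =
      ((τ : ℝ) : ℂ) • (1 + replicateCol Unit (-(τ : ℂ)⁻¹ • v) * replicateRow Unit (star v)) := by
    ext i j
    simp [R, vecMulVec, Matrix.mul_apply]
    field_simp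
    ring
  have h2 : (1 + star v ⬝ᵥ (-(τ : ℂ)⁻¹ • v)) = ((1 - (∑ i, ‖v i‖ ^ 2) / τ : ℝ) : ℂ) := by
    have : star v ⬝ᵥ v = ((∑ i, ‖v i‖ ^ 2 : ℝ) : ℂ) := by
      simp only [dotProduct, Pi.star_apply]
      push_cast
      refine Finset.sum_congr rfl fun i _ => ?_
      rw [← Complex.conj_mul']
      rfl
    rw [dotProduct_smul, this]
    push_cast
    simp only [smul_eq_mul]
    field_simp
    ring
  rw [h1, det_smul, det_one_add_replicateCol_mul_replicateRow, h2, det_smul, det_one, mul_one,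
    mul_comm, Complex.re_ofReal_mul]

/-- The Marcus-Spielman-Srivastava type theorem for two-valued random vectors. -/
theorem mss {ι : Type*} [DecidableEq ι] (s : Finset ι) (a b : ι → n → ℂ) (t : ι → ℝ)
    (h0 : ∀ i, 0 ≤ t i) (h1 : ∀ i, t i ≤ 1) {τ : ℝ} (hτ : 0 < τ) (hτ1 : τ ≤ 1)
    (ha : ∀ i, ∑ k, ‖a i k‖ ^ 2 ≤ τ ^ 2 / 8) (hb : ∀ i, ∑ k, ‖b i k‖ ^ 2 ≤ τ ^ 2 / 8)
    (hsum : (1 - ∑ i ∈ s, Em (a i) (b i) (t i)).PosSemidef) :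
    ∃ c : ι → Bool, ((τ : ℂ) • 1 + ∑ i ∈ s, Em (a i) (b i) (t i)
      - ∑ i ∈ s, R (if c i then a i else b i)).PosSemidef := by
  set E := ∑ i ∈ s, Em (a i) (b i) (t i) with hE
  set δ : ℝ := 1 + τ / 2 with hδ
  set Y : Matrix n n ℂ := ((τ / 2 : ℝ) : ℂ) • (1 - E) with hY
  have hYp : Y.PosSemidef := hsum.smul (Complex.zero_le_real.2 (by linarith))
  have h1p : (((τ / 2 : ℝ) : ℂ) • (1 : Matrix n n ℂ)).PosDef :=
    PosDef.one.smul (Complex.zero_lt_real.2 (by linarith))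
  set M := ((τ / 2 : ℝ) : ℂ) • (1 : Matrix n n ℂ) + Y with hMdef
  have hM : M.PosDef := h1p.add_posSemidef hYp
  have hV : ∀ v ∈ {v : n → ℂ | ∑ k, ‖v k‖ ^ 2 ≤ τ ^ 2 / 8},
      (det M).re ≤ δ * (det (M - R v)).re := by
    intro v hv
    have hm := mono good_det h1p.isHermitian (above_det h1p) v hYp
    rw [← hMdef, det_sub_R (by linarith)] at hm
    have q0 := (above_det h1p).pos
    have q1 := (above_det hM).pos
    have q2 : 1 ≤ δ * (1 - (∑ i, ‖v i‖ ^ 2) / (τ / 2)) := by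
      have : (∑ i, ‖v i‖ ^ 2) / (τ / 2) ≤ τ / 4 := by
        rw [div_le_iff₀ (by linarith)]
        have := hv.out
        nlinarith
      rw [hδ]
      nlinarith
    refine le_of_mul_le_mul_right ?_ q0
    nlinarith [mul_le_mul_of_nonneg_right q2 (mul_pos q0 q1).le,
      mul_le_mul_of_nonneg_left hm (by linarith : (0:ℝ) ≤ δ)]
  have hB := (barrier a b t h0 h1 (δ := δ) (by linarith) (by linarith) hM _ ha hb hV s.toList).1
  rw [Finset.sum_map_toList, ← hE] at hB
  have eM : M + (δ : ℂ) • E = (τ : ℂ) • 1 + E := by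
    rw [hMdef, hY, hδ, smul_sub]
    ext i j
    simp [Matrix.add_apply, Matrix.smul_apply, Matrix.sub_apply]
    ring
  rw [eM] at hB
  have hEp : E.PosSemidef := posSemidef_sum _ fun i _ => Em_psd _ _ (h0 i) (h1 i)
  have hH : ((τ : ℂ) • (1 : Matrix n n ℂ) + E).IsHermitian :=
    ((PosSemidef.one.smul (Complex.zero_le_real.2 hτ.le)).add hEp).isHermitian
  obtain ⟨c, hc⟩ := choose_outcome a b t h0 h1 _ s.nodup_toList hH hB
  rw [Finset.sum_map_toList] at hc
  refine ⟨c, (posDef_of_above (hH.sub ?_) hc).posSemidef⟩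
  exact (posSemidef_sum _ fun i _ => R_psd _).isHermitian



lemma qf_R (v x : n → ℂ) : star x ⬝ᵥ (R v *ᵥ x) = ((‖star v ⬝ᵥ x‖ ^ 2 : ℝ) : ℂ) := by
  rw [R, vecMulVec_mulVec]
  push_cast
  rw [← Complex.conj_mul', dotProduct_smul]
  have : star x ⬝ᵥ v = starRingEnd ℂ (star v ⬝ᵥ x) := by
    rw [starRingEnd_apply, ← star_dotProduct_star, star_star]
  rw [this]
  simp [mul_comm]

lemma qf_one (x : n → ℂ) : star x ⬝ᵥ ((1 : Matrix n n ℂ) *ᵥ x) = ((∑ k, ‖x k‖ ^ 2 : ℝ) : ℂ) := by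
  rw [one_mulVec]
  simp only [dotProduct, Pi.star_apply]
  push_cast
  refine Finset.sum_congr rfl fun i _ => ?_
  rw [← Complex.conj_mul']
  rfl

lemma qf_sum {ι : Type*} (s : Finset ι) (f : ι → Matrix n n ℂ) (g : ι → ℝ) (x : n → ℂ)
    (h : ∀ i, star x ⬝ᵥ (f i *ᵥ x) = (g i : ℂ)) :
    star x ⬝ᵥ ((∑ i ∈ s, f i) *ᵥ x) = ((∑ i ∈ s, g i : ℝ) : ℂ) := by
  rw [sum_mulVec, dotProduct_sum]
  push_cast
  exact Finset.sum_congr rfl fun i _ => h i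

lemma qf_Em (a b x : n → ℂ) (t : ℝ) : star x ⬝ᵥ (Em a b t *ᵥ x) =
    ((t * ‖star a ⬝ᵥ x‖ ^ 2 + (1 - t) * ‖star b ⬝ᵥ x‖ ^ 2 : ℝ) : ℂ) := by
  rw [Em, add_mulVec, smul_mulVec, smul_mulVec, dotProduct_add, dotProduct_smul, dotProduct_smul,
    qf_R, qf_R]
  simp

lemma fin_disc {ι : Type*} [DecidableEq ι] (s : Finset ι) (w : ι → n → ℂ) (t : ι → ℝ)
    (h0 : ∀ i, 0 ≤ t i) (h1 : ∀ i, t i ≤ 1) {τ : ℝ} (hτ : 0 < τ) (hτ1 : τ ≤ 1)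
    (hw : ∀ i, ∑ k, ‖w i k‖ ^ 2 ≤ τ ^ 2 / 8)
    (hsum : ∀ x : n → ℂ, ∑ i ∈ s, ‖star (w i) ⬝ᵥ x‖ ^ 2 ≤ ∑ k, ‖x k‖ ^ 2) :
    ∃ c : ι → Bool, ∀ x : n → ℂ,
      |∑ i ∈ s, ((if c i then 1 else 0) - t i) * ‖star (w i) ⬝ᵥ x‖ ^ 2| ≤ τ * ∑ k, ‖x k‖ ^ 2 := by
  let a : ι → (n ⊕ n) → ℂ := fun i => Sum.elim (w i) 0
  let b : ι → (n ⊕ n) → ℂ := fun i => Sum.elim 0 (w i)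
  have qa : ∀ i (x : n ⊕ n → ℂ), star (a i) ⬝ᵥ x = star (w i) ⬝ᵥ (x ∘ Sum.inl) := by
    intro i x; simp [a, dotProduct]
  have qb : ∀ i (x : n ⊕ n → ℂ), star (b i) ⬝ᵥ x = star (w i) ⬝ᵥ (x ∘ Sum.inr) := by
    intro i x; simp [b, dotProduct]
  obtain ⟨c, hc⟩ := mss s a b t h0 h1 hτ hτ1 (by intro i; simpa [a] using hw i)
    (by intro i; simpa [b] using hw i) (by
      refine PosSemidef.of_dotProduct_mulVec_nonneg ?_ ?_
      · exact PosSemidef.one.isHermitian.sub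
          (posSemidef_sum _ fun i _ => Em_psd _ _ (h0 i) (h1 i)).isHermitian
      · intro x
        rw [sub_mulVec, dotProduct_sub, qf_one, qf_sum s _ _ x (fun i => qf_Em _ _ x _),
          ← Complex.ofReal_sub, Complex.zero_le_real, sub_nonneg, Fintype.sum_sum_type]
        refine le_trans ?_ (add_le_add (hsum (x ∘ Sum.inl)) (hsum (x ∘ Sum.inr)))
        rw [← Finset.sum_add_distrib]
        refine Finset.sum_le_sum fun i _ => ?_
        rw [qa, qb]
        have p1 := sq_nonneg ‖star (w i) ⬝ᵥ (x ∘ Sum.inl)‖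
        have p2 := sq_nonneg ‖star (w i) ⬝ᵥ (x ∘ Sum.inr)‖
        nlinarith [h0 i, h1 i, mul_nonneg (h0 i) p2, mul_nonneg (sub_nonneg.2 (h1 i)) p1])
  refine ⟨c, fun x => ?_⟩
  have key : ∀ y : n ⊕ n → ℂ, 0 ≤ τ * ∑ k, ‖y k‖ ^ 2 +
      ∑ i ∈ s, (t i * ‖star (a i) ⬝ᵥ y‖ ^ 2 + (1 - t i) * ‖star (b i) ⬝ᵥ y‖ ^ 2) -
      ∑ i ∈ s, ‖star (if c i then a i else b i) ⬝ᵥ y‖ ^ 2 := by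
    intro y
    have := hc.dotProduct_mulVec_nonneg y
    rw [sub_mulVec, dotProduct_sub, add_mulVec, dotProduct_add, smul_mulVec, dotProduct_smul,
      qf_one, qf_sum s _ _ y (fun i => qf_Em _ _ y _), qf_sum s _ _ y (fun i => qf_R _ y)] at this
    rw [smul_eq_mul] at this
    exact_mod_cast this
  have k1 := key (Sum.elim x 0)
  have k2 := key (Sum.elim 0 x)
  have e : ∀ i y, ‖star (if c i then a i else b i) ⬝ᵥ y‖ ^ 2 =
      if c i then ‖star (w i) ⬝ᵥ (y ∘ Sum.inl)‖ ^ 2 else ‖star (w i) ⬝ᵥ (y ∘ Sum.inr)‖ ^ 2 := by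
    intro i y
    split_ifs
    · rw [qa]
    · rw [qb]
  simp only [e] at k1 k2
  simp only [qa, qb] at k1 k2
  simp at k1 k2
  rw [abs_le]
  constructor
  · have : ∑ i ∈ s, ((if c i then 1 else 0) - t i) * ‖star (w i) ⬝ᵥ x‖ ^ 2 =
      ∑ i ∈ s, (1 - t i) * ‖star (w i) ⬝ᵥ x‖ ^ 2 -
        ∑ i ∈ s, (if c i then 0 else ‖star (w i) ⬝ᵥ x‖ ^ 2) := by
      rw [← Finset.sum_sub_distrib]
      refine Finset.sum_congr rfl fun i _ => ?_
      split_ifs <;> ring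
    linarith
  · have : ∑ i ∈ s, ((if c i then 1 else 0) - t i) * ‖star (w i) ⬝ᵥ x‖ ^ 2 =
      ∑ i ∈ s, (if c i then ‖star (w i) ⬝ᵥ x‖ ^ 2 else 0)
        - ∑ i ∈ s, (t i) * ‖star (w i) ⬝ᵥ x‖ ^ 2 := by
      rw [← Finset.sum_sub_distrib]
      refine Finset.sum_congr rfl fun i _ => ?_
      split_ifs <;> ring
    linarith

end KS


namespace KS

open Matrix

section Hilbert

variable {H : Type*} [NormedAddCommGroup H] [InnerProductSpace ℂ H]

lemma hilb_disc {ι : Type*} [DecidableEq ι] (s : Finset ι) (w : ι → H) (t : ι → ℝ)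
    (h0 : ∀ i, 0 ≤ t i) (h1 : ∀ i, t i ≤ 1) {τ : ℝ} (hτ : 0 < τ) (hτ1 : τ ≤ 1)
    (hw : ∀ i, ‖w i‖ ^ 2 ≤ τ ^ 2 / 8)
    (hsum : ∀ x : H, ∑ i ∈ s, ‖inner ℂ (w i) x‖ ^ 2 ≤ ‖x‖ ^ 2) :
    ∃ c : ι → Bool, ∀ x : H,
      |∑ i ∈ s, ((if c i then 1 else 0) - t i) * ‖inner ℂ (w i) x‖ ^ 2| ≤ τ * ‖x‖ ^ 2 := by
  classical
  let K : Submodule ℂ H := Submodule.span ℂ ((s.image w : Finset H) : Set H)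
  have : FiniteDimensional ℂ K := FiniteDimensional.span_finset ℂ _
  let b := stdOrthonormalBasis ℂ K
  let v : Fin (Module.finrank ℂ K) → H := fun k => (b k : H)
  have hv : Orthonormal ℂ v := by
    have := b.orthonormal.comp_linearIsometry K.subtypeₗᵢ
    exact this
  let w' : ι → Fin (Module.finrank ℂ K) → ℂ := fun i k => inner ℂ (v k) (w i)
  have hX : ∀ (x : Fin (Module.finrank ℂ K) → ℂ) i,
      star (w' i) ⬝ᵥ x = inner ℂ (w i) (∑ k, x k • v k) := by
    intro x i
    rw [inner_sum]
    simp only [dotProduct, w', Pi.star_apply]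
    refine Finset.sum_congr rfl fun k _ => ?_
    rw [inner_smul_right, mul_comm, ← inner_conj_symm (w i) (v k)]
    rfl
  have hN : ∀ (x : Fin (Module.finrank ℂ K) → ℂ), ‖∑ k, x k • v k‖ ^ 2 = ∑ k, ‖x k‖ ^ 2 := by
    intro x
    have h := hv.inner_sum x x Finset.univ
    rw [inner_self_eq_norm_sq_to_K] at h
    have h2 : ∑ i, (starRingEnd ℂ) (x i) * x i = ((∑ k, ‖x k‖ ^ 2 : ℝ) : ℂ) := by
      push_cast
      exact Finset.sum_congr rfl fun i _ => Complex.conj_mul' _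
    rw [h2] at h
    have h3 := congrArg Complex.re h
    rw [Complex.ofReal_re] at h3
    rw [← h3, ← Complex.ofReal_re (‖∑ k, x k • v k‖ ^ 2), Complex.ofReal_pow]
    rfl
  obtain ⟨c, hc⟩ := fin_disc s w' t h0 h1 hτ hτ1
    (fun i => (hv.sum_inner_products_le (w i)).trans (hw i))
    (fun x => by simp only [hX]; rw [← hN]; exact hsum _)
  refine ⟨c, fun x => ?_⟩
  have h := hc (fun k => inner ℂ (v k) x)
  have hle : ∑ k, ‖inner ℂ (v k) x‖ ^ 2 ≤ ‖x‖ ^ 2 := hv.sum_inner_products_le x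
  refine le_trans (le_of_eq ?_) (h.trans (mul_le_mul_of_nonneg_left hle hτ.le))
  congr 1
  refine Finset.sum_congr rfl fun i hi => ?_
  congr 3
  have hwK : w i ∈ K := Submodule.subset_span (by simpa using ⟨i, hi, rfl⟩)
  have hrep : w i = ∑ k, inner ℂ (v k) (w i) • v k := by
    have := congrArg (Subtype.val) (b.sum_repr' ⟨w i, hwK⟩)
    simp only [Submodule.coe_sum, Submodule.coe_smul] at this
    exact this.symm
  conv_lhs => rw [hrep]
  rw [sum_inner]
  simp only [dotProduct, w', Pi.star_apply]
  refine Finset.sum_congr rfl fun k _ => ?_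
  rw [inner_smul_left]
  rfl

lemma rankOne_apply (u v : H) : rankOne u v = inner ℂ u v • u := by
  simp [rankOne]

lemma norm_disc {ι : Type*} (s : Finset ι) (w : ι → H) (m : ι → ℝ) {τ : ℝ} (hτ : 0 ≤ τ)
    (h : ∀ x : H, |∑ i ∈ s, m i * ‖inner ℂ (w i) x‖ ^ 2| ≤ τ * ‖x‖ ^ 2) :
    ‖∑ i ∈ s, (m i : ℂ) • rankOne (w i)‖ ≤ τ := by
  have happ : ∀ x, (∑ i ∈ s, (m i : ℂ) • rankOne (w i)) x
      = ∑ i ∈ s, ((m i : ℂ) * inner ℂ (w i) x) • w i := by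
    intro x
    rw [_root_.sum_apply]
    refine Finset.sum_congr rfl fun i _ => ?_
    change (m i : ℂ) • rankOne (w i) x = _
    rw [rankOne_apply, smul_smul]
  set D := ∑ i ∈ s, (m i : ℂ) • rankOne (w i) with hD
  have hin : ∀ x y, inner ℂ (D x) y =
      ∑ i ∈ s, (m i : ℂ) * (starRingEnd ℂ (inner ℂ (w i) x) * inner ℂ (w i) y) := by
    intro x y
    rw [happ, sum_inner]
    refine Finset.sum_congr rfl fun i _ => ?_
    rw [inner_smul_left]
    simp
    ring
  have hsym : (D : H →ₗ[ℂ] H).IsSymmetric := by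
    intro x y
    change inner ℂ (D x) y = inner ℂ x (D y)
    rw [← inner_conj_symm x (D y), hin, hin, map_sum]
    refine Finset.sum_congr rfl fun i _ => ?_
    rw [map_mul, map_mul, Complex.conj_conj, Complex.conj_ofReal]
    ring
  rw [ContinuousLinearMap.norm_eq_iSup_rayleighQuotient D hsym]
  refine ciSup_le fun x => ?_
  rw [ContinuousLinearMap.rayleighQuotient, ContinuousLinearMap.reApplyInnerSelf_apply, abs_div,
    abs_sq]
  refine div_le_of_le_mul₀ (sq_nonneg _) hτ ?_
  refine le_trans (le_of_eq ?_) (h x)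
  congr 1
  rw [hin]
  have : ∑ i ∈ s, (m i : ℂ) * (starRingEnd ℂ (inner ℂ (w i) x) * inner ℂ (w i) x) =
      ((∑ i ∈ s, m i * ‖inner ℂ (w i) x‖ ^ 2 : ℝ) : ℂ) := by
    push_cast
    exact Finset.sum_congr rfl fun i _ => by rw [Complex.conj_mul']
  rw [this]
  exact Complex.ofReal_re _

lemma bessel (u : ℕ → H) (A : H →L[ℂ] H)
    (hA : ∀ v : H,
      Tendsto (fun n => ∑ i ∈ Finset.range n, rankOne (u i) v) atTop (nhds (A v)))
    (hAle : (1 - A).IsPositive) (s : Finset ℕ) (x : H) :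
    ∑ i ∈ s, ‖inner ℂ (u i) x‖ ^ 2 ≤ ‖x‖ ^ 2 := by
  have h1 : Tendsto (fun n => ∑ i ∈ Finset.range n, ‖inner ℂ (u i) x‖ ^ 2) atTop
      (nhds (inner ℂ (A x) x).re) := by
    have := (Complex.continuous_re.tendsto _).comp ((hA x).inner (tendsto_const_nhds (x := x)))
    refine this.congr fun n => ?_
    simp only [Function.comp]
    rw [sum_inner, Complex.re_sum]
    refine Finset.sum_congr rfl fun i _ => ?_
    rw [rankOne_apply, inner_smul_left, Complex.conj_mul']
    norm_cast
  have hmono : Monotone (fun n => ∑ i ∈ Finset.range n, ‖inner ℂ (u i) x‖ ^ 2) :=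
    monotone_nat_of_le_succ fun n => by
      rw [Finset.sum_range_succ]
      exact le_add_of_nonneg_right (sq_nonneg _)
  obtain ⟨N, hN⟩ := s.exists_nat_subset_range
  have h2 : ∑ i ∈ s, ‖inner ℂ (u i) x‖ ^ 2 ≤ (inner ℂ (A x) x).re :=
    (Finset.sum_le_sum_of_subset_of_nonneg hN fun _ _ _ => sq_nonneg _).trans
      (hmono.ge_of_tendsto h1 N)
  have h3 := hAle.re_inner_nonneg_left x
  have h4 : (inner ℂ x x : ℂ).re = ‖x‖ ^ 2 := by
    rw [inner_self_eq_norm_sq_to_K]; norm_cast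
  simp only [ContinuousLinearMap.sub_apply, ContinuousLinearMap.one_apply, inner_sub_left,
    map_sub, RCLike.re_to_complex] at h3
  rw [h4] at h3
  linarith

lemma synth (u : ℕ → H) (s : Finset ℕ)
    (hb : ∀ x : H, ∑ i ∈ s, ‖inner ℂ (u i) x‖ ^ 2 ≤ ‖x‖ ^ 2) (c : ℕ → ℂ) :
    ‖∑ i ∈ s, c i • u i‖ ^ 2 ≤ ∑ i ∈ s, ‖c i‖ ^ 2 := by
  set x := ∑ i ∈ s, c i • u i with hx
  have h1 : ‖x‖ ^ 2 ≤ ∑ i ∈ s, ‖c i‖ * ‖inner ℂ (u i) x‖ := by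
    have : ‖(inner ℂ x x : ℂ)‖ = ‖x‖ ^ 2 := by
      rw [inner_self_eq_norm_sq_to_K]; simp
    rw [← this]
    conv_lhs => rw [hx, sum_inner, ← hx]
    refine (norm_sum_le _ _).trans (Finset.sum_le_sum fun i _ => ?_)
    rw [inner_smul_left, norm_mul]
    simp
  have h2 : ∑ i ∈ s, ‖c i‖ * ‖inner ℂ (u i) x‖ ≤
      (∑ i ∈ s, ‖c i‖ ^ 2 + ∑ i ∈ s, ‖inner ℂ (u i) x‖ ^ 2) / 2 := by
    rw [← Finset.sum_add_distrib, Finset.sum_div]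
    exact Finset.sum_le_sum fun i _ => by nlinarith [sq_nonneg (‖c i‖ - ‖inner ℂ (u i) x‖)]
  have h3 := hb x
  linarith

lemma strong [CompleteSpace H] (u : ℕ → H)
    (hb : ∀ (s : Finset ℕ) (x : H), ∑ i ∈ s, ‖inner ℂ (u i) x‖ ^ 2 ≤ ‖x‖ ^ 2)
    (m : ℕ → ℝ) (h0 : ∀ i, 0 ≤ m i) (h1 : ∀ i, m i ≤ 1) :
    ∃ T : H →L[ℂ] H, ∀ v : H,
      Tendsto (fun n => ∑ i ∈ Finset.range n, (m i : ℂ) • rankOne (u i) v) atTop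
        (nhds (T v)) := by
  have hs : ∀ v : H, Summable (fun i => (m i : ℂ) • rankOne (u i) v) := by
    intro v
    have hq : Summable (fun i => ‖inner ℂ (u i) v‖ ^ 2) :=
      summable_of_sum_le (fun _ => sq_nonneg _) (fun s => hb s v)
    rw [summable_iff_vanishing_norm] at hq ⊢
    intro ε hε
    obtain ⟨s, hs⟩ := hq (ε ^ 2) (by positivity)
    refine ⟨s, fun r hr => ?_⟩
    have q1 := hs r hr
    have q2 := synth u r (hb r) (fun i => (m i : ℂ) * inner ℂ (u i) v)
    have q3 : ∑ i ∈ r, ‖(m i : ℂ) * inner ℂ (u i) v‖ ^ 2 ≤ ∑ i ∈ r, ‖inner ℂ (u i) v‖ ^ 2 := by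
      refine Finset.sum_le_sum fun i _ => ?_
      rw [norm_mul, mul_pow]
      have : ‖(m i : ℂ)‖ = m i := by rw [Complex.norm_real, Real.norm_of_nonneg (h0 i)]
      rw [this]
      exact mul_le_of_le_one_left (sq_nonneg _) (pow_le_one₀ (h0 i) (h1 i))
    have q4 := le_abs_self (∑ i ∈ r, ‖inner ℂ (u i) v‖ ^ 2)
    rw [Real.norm_eq_abs] at q1
    have e : ∑ i ∈ r, (m i : ℂ) • rankOne (u i) v
        = ∑ i ∈ r, ((m i : ℂ) * inner ℂ (u i) v) • u i :=
      Finset.sum_congr rfl fun i _ => by rw [rankOne_apply, smul_smul]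
    rw [e]
    refine lt_of_pow_lt_pow_left₀ 2 hε.le ?_
    linarith
  let g : ℕ → H →L[ℂ] H := fun n => ∑ i ∈ Finset.range n, (m i : ℂ) • rankOne (u i)
  have hg : Tendsto (fun n x => g n x) atTop (nhds fun v => ∑' i, (m i : ℂ) • rankOne (u i) v) := by
    rw [tendsto_pi_nhds]
    intro v
    refine (hs v).hasSum.tendsto_sum_nat.congr fun n => ?_
    simp [g, ContinuousLinearMap.sum_apply]
  exact ⟨continuousLinearMapOfTendsto g hg, fun v => (hs v).hasSum.tendsto_sum_nat⟩

lemma compact_rankOne (u : H) : IsCompactOperator (rankOne u) := by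
  have : IsCompactOperator (id : ℂ → ℂ) :=
    isCompactOperator_id_iff_locallyCompactSpace.2 inferInstance
  exact (this.comp_clm (innerSL ℂ u)).clm_comp ((1 : ℂ →L[ℂ] ℂ).smulRight u)

lemma compact_sum {ι : Type*} (s : Finset ι) (w : ι → H) (m : ι → ℂ) :
    IsCompactOperator (∑ i ∈ s, m i • rankOne (w i) : H →L[ℂ] H) := by
  have : (∑ i ∈ s, m i • rankOne (w i) : H →L[ℂ] H) ∈ compactOperator (RingHom.id ℂ) H H :=
    Submodule.sum_mem _ fun i _ => Submodule.smul_mem _ _ (compact_rankOne (w i))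
  exact this

end Hilbert

end KS

/-- If `(uᵢ)` is a sequence of vectors in a complex Hilbert space with `‖uᵢ‖ → 0` and
`∑ᵢ uᵢ ⊗ uᵢ ≤ I` (the partial sums converge strongly to an operator `A` with `I - A`
positive), and `0 ≤ tᵢ ≤ 1` for each `i`, then there is a set of indices `S ⊆ ℕ`
(encoded by a boolean function `f`, with `S = {i | f i = true}`) such that
`∑_{i ∈ S} uᵢ ⊗ uᵢ − ∑ᵢ tᵢ uᵢ ⊗ uᵢ` (both sums existing in the strong operator
topology) is a compact operator. -/
theorem stmt7 {H : Type*} [NormedAddCommGroup H] [InnerProductSpace ℂ H] [CompleteSpace H]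
    (u : ℕ → H) (A : H →L[ℂ] H)
    (hu : Tendsto (fun i => ‖u i‖) atTop (nhds 0))
    (hA : ∀ v : H,
      Tendsto (fun n => ∑ i ∈ Finset.range n, rankOne (u i) v) atTop (nhds (A v)))
    (hApos : A.IsPositive) (hAle : (1 - A).IsPositive)
    (t : ℕ → ℝ) (ht0 : ∀ i, 0 ≤ t i) (ht1 : ∀ i, t i ≤ 1) :
    ∃ (f : ℕ → Bool) (T T' : H →L[ℂ] H),
      (∀ v : H,
        Tendsto (fun n => ∑ i ∈ (Finset.range n).filter (fun i => f i = true),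
          rankOne (u i) v) atTop (nhds (T v))) ∧
      (∀ v : H,
        Tendsto (fun n => ∑ i ∈ Finset.range n, (t i : ℂ) • rankOne (u i) v)
          atTop (nhds (T' v))) ∧
      IsCompactOperator (T - T' : H →L[ℂ] H) := by
  classical
  have hb := KS.bessel u A hA hAle
  have hτ : ∀ k : ℕ, (0 : ℝ) < (1 / 2) ^ k := fun k => by positivity
  have hev : ∀ k : ℕ, ∀ᶠ M in atTop, ∀ i ≥ M, ‖u i‖ ^ 2 ≤ ((1 / 2 : ℝ) ^ k) ^ 2 / 8 := by
    intro k
    have h2 : Tendsto (fun i => ‖u i‖ ^ 2) atTop (nhds 0) := by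
      simpa using hu.pow 2
    have h3 : ∀ᶠ i in atTop, ‖u i‖ ^ 2 ≤ ((1 / 2 : ℝ) ^ k) ^ 2 / 8 :=
      h2.eventually_le_const (by positivity)
    obtain ⟨M, hM⟩ := eventually_atTop.1 h3
    exact eventually_atTop.2 ⟨M, fun M' hM' i hi => hM i (hM'.trans hi)⟩
  obtain ⟨N, hNmono, hN⟩ := Filter.extraction_forall_of_eventually hev
  have hblock : ∀ k : ℕ, ∃ c : ℕ → Bool,
      ‖∑ i ∈ Finset.Ico (N k) (N (k + 1)),
        (((if c i then (1 : ℝ) else 0) - t i : ℝ) : ℂ) • rankOne (u i)‖ ≤ (1 / 2) ^ k := by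
    intro k
    have hcong : ∀ i ∈ Finset.Ico (N k) (N (k + 1)), (if N k ≤ i then u i else 0) = u i := by
      intro i hi
      rw [if_pos (Finset.mem_Ico.1 hi).1]
    obtain ⟨c, hc⟩ := KS.hilb_disc (Finset.Ico (N k) (N (k + 1)))
      (fun i => if N k ≤ i then u i else 0) t ht0 ht1 (hτ k)
      (pow_le_one₀ (by norm_num) (by norm_num))
      (fun i => by
        by_cases h : N k ≤ i
        · simp only [if_pos h]
          exact hN k i h
        · simp only [if_neg h, norm_zero, zero_pow two_ne_zero]
          positivity)
      (fun x => by
        refine le_trans (le_of_eq (Finset.sum_congr rfl fun i hi => ?_)) (hb _ x)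
        rw [hcong i hi])
    refine ⟨c, KS.norm_disc _ _ _ (hτ k).le fun x => ?_⟩
    refine le_trans (le_of_eq ?_) (hc x)
    congr 1
    refine Finset.sum_congr rfl fun i hi => ?_
    simp only [hcong i hi]
  choose c hc using hblock
  let f : ℕ → Bool := fun i => decide (∃ k, N k ≤ i ∧ i < N (k + 1) ∧ c k i = true)
  have hf : ∀ k, ∀ i ∈ Finset.Ico (N k) (N (k + 1)), f i = c k i := by
    intro k i hi
    obtain ⟨h1, h2⟩ := Finset.mem_Ico.1 hi
    have huniq : ∀ j, N j ≤ i → i < N (j + 1) → j = k := by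
      intro j h3 h4
      have h5 : j < k + 1 := hNmono.lt_iff_lt.1 (lt_of_le_of_lt h3 h2)
      have h6 : k < j + 1 := hNmono.lt_iff_lt.1 (lt_of_le_of_lt h1 h4)
      omega
    by_cases hck : c k i = true
    · rw [hck]
      exact decide_eq_true ⟨k, h1, h2, hck⟩
    · have hfalse : ¬ ∃ j, N j ≤ i ∧ i < N (j + 1) ∧ c j i = true := by
        rintro ⟨j, h3, h4, h5⟩
        rw [huniq j h3 h4] at h5
        exact hck h5
      rw [Bool.eq_false_iff.2 hck]
      exact decide_eq_false hfalse
  let m : ℕ → ℝ := fun i => if f i = true then 1 else 0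
  obtain ⟨T, hT⟩ := KS.strong u hb m
    (fun i => by simp only [m]; split_ifs <;> norm_num)
    (fun i => by simp only [m]; split_ifs <;> norm_num)
  obtain ⟨T', hT'⟩ := KS.strong u hb t ht0 ht1
  refine ⟨f, T, T', fun v => (hT v).congr fun n => ?_, hT', ?_⟩
  · rw [Finset.sum_filter]
    refine Finset.sum_congr rfl fun i _ => ?_
    simp only [m]
    split_ifs <;> simp
  let S : ℕ → H →L[ℂ] H := fun n =>
    ∑ i ∈ Finset.range n, ((m i - t i : ℝ) : ℂ) • rankOne (u i)
  have hSapp : ∀ v, Tendsto (fun n => S n v) atTop (nhds ((T - T') v)) := by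
    intro v
    refine ((hT v).sub (hT' v)).congr fun n => ?_
    rw [← Finset.sum_sub_distrib]
    simp only [S]
    rw [_root_.sum_apply]
    refine Finset.sum_congr rfl fun i _ => ?_
    change _ = ((m i - t i : ℝ) : ℂ) • rankOne (u i) v
    rw [Complex.ofReal_sub, sub_smul]
  have hstep : ∀ k, dist (S (N k)) (S (N (k + 1))) ≤ 1 * (1 / 2 : ℝ) ^ k := by
    intro k
    rw [dist_comm, dist_eq_norm, one_mul]
    simp only [S]
    rw [← Finset.sum_Ico_eq_sub _ (hNmono.monotone (Nat.le_succ k))]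
    refine le_trans (le_of_eq ?_) (hc k)
    congr 1
    refine Finset.sum_congr rfl fun i hi => ?_
    simp only [m, hf k i hi]
  have hcau : CauchySeq fun k => S (N k) :=
    cauchySeq_of_le_geometric (1 / 2) 1 (by norm_num) hstep
  obtain ⟨L, hL⟩ := cauchySeq_tendsto_of_complete hcau
  have hLc : IsCompactOperator L :=
    isCompactOperator_of_tendsto hL (Eventually.of_forall fun k => KS.compact_sum _ _ _)
  have hEq : T - T' = L := by
    ext v
    have h1 : Tendsto (fun k => S (N k) v) atTop (nhds ((T - T') v)) :=
      (hSapp v).comp hNmono.tendsto_atTop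
    have h2 : Tendsto (fun k => S (N k) v) atTop (nhds (L v)) :=
      ((ContinuousLinearMap.apply ℂ H v).continuous.tendsto L).comp hL
    exact tendsto_nhds_unique h1 h2
  rw [hEq]
  exact hLc
end
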